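/- arXiv:1512.02376 — 5 statements merged into one kernel-verified Lean document; each statement's English description precedes it below -/
import Mathlib

section
/- The set 𝒢_{D_{2m}} is a Gröbner basis of the toric ideal I_{D_{2m}} with respect to the term order ≻^even: the ideal generated by the ≻^even-leading monomials of all nonzero elements of I_{D_{2m}} equals the ideal generated by the ≻^even-leading monomials of the elements of 𝒢_{D_{2m}} (which are the first-written monomials of the listed binomials). -/
open MvPolynomial

/-- Index type for the variables of the polynomial ring `R` in the `D_{2m}` case (`n = 2m`).
The set `J = {3,5,…,n-1}` of odd integers is realised as `{2t+3 | t : Fin (m-1)}` and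
`J^c = {2,4,…,n-2}` as `{2t+2 | t : Fin (m-1)}`.  The constructors are:
`x1 ↦ x_1`, `xn ↦ x_n`, `xJ t ↦ x_{2t+3}` (`2t+3 ∈ J`), `xJc t ↦ x_{2t+2}` (`2t+2 ∈ J^c`),
`xP s t _ ↦ x_{2s+3,2t+3}` (a pair `k < ℓ` in `J`), `y t ↦ y_{2t+3}`. -/
inductive DVar (m : ℕ) : Type where
  | x1 : DVar m
  | xn : DVar m
  | xJ : Fin (m - 1) → DVar m
  | xJc : Fin (m - 1) → DVar m
  | xP : (s t : Fin (m - 1)) → s < t → DVar m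
  | y : Fin (m - 1) → DVar m

/-- The images of the variables under `π`, where `u_i = X i` inside
`K[u_1,…,u_n] ⊆ MvPolynomial ℕ K`:
`π(x_1) = u_1²`, `π(x_n) = u_n²` (`n = 2m`), `π(x_i) = u_i²` for `i ∈ J`,
`π(x_j) = u_j` for `j ∈ J^c`, `π(x_{k,ℓ}) = u_k u_ℓ` for `k < ℓ` in `J`, and
`π(y_i) = u_i u_1 u_n` for `i ∈ J`. -/
noncomputable def dImage (K : Type*) [Field K] (m : ℕ) : DVar m → MvPolynomial ℕ K
  | .x1 => X 1 ^ 2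
  | .xn => X (2 * m) ^ 2
  | .xJ t => X (2 * t.val + 3) ^ 2
  | .xJc t => X (2 * t.val + 2)
  | .xP s t _ => X (2 * s.val + 3) * X (2 * t.val + 3)
  | .y t => X (2 * t.val + 3) * X 1 * X (2 * m)

/-- The toric map `π : R → K[u_1,…,u_n]` for the `D_{2m}` configuration. -/
noncomputable def piD (K : Type*) [Field K] (m : ℕ) :
    MvPolynomial (DVar m) K →ₐ[K] MvPolynomial ℕ K :=
  aeval (dImage K m)

/-- The set `𝒢_{D_{2m}}` of binomials. -/
noncomputable def GD (K : Type*) [Field K] (m : ℕ) : Set (MvPolynomial (DVar m) K) :=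
  {g | (∃ (i j k l : Fin (m - 1)) (hij : i < j) (hjk : j < k) (hkl : k < l),
          g = X (DVar.xP i k (hij.trans hjk)) * X (DVar.xP j l (hjk.trans hkl))
              - X (DVar.xP i j hij) * X (DVar.xP k l hkl) ∨
          g = X (DVar.xP i l (hij.trans (hjk.trans hkl))) * X (DVar.xP j k hjk)
              - X (DVar.xP i j hij) * X (DVar.xP k l hkl)) ∨
      (∃ (i j k : Fin (m - 1)) (hij : i < j) (hjk : j < k),
          g = X (DVar.xP i j hij) * X (DVar.xP i k (hij.trans hjk))
              - X (DVar.xJ i) * X (DVar.xP j k hjk) ∨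
          g = X (DVar.xJ j) * X (DVar.xP i k (hij.trans hjk))
              - X (DVar.xP i j hij) * X (DVar.xP j k hjk) ∨
          g = X (DVar.xJ k) * X (DVar.xP i j hij)
              - X (DVar.xP i k (hij.trans hjk)) * X (DVar.xP j k hjk) ∨
          g = X (DVar.xP j k hjk) * X (DVar.y i)
              - X (DVar.xP i j hij) * X (DVar.y k) ∨
          g = X (DVar.xP i k (hij.trans hjk)) * X (DVar.y j)
              - X (DVar.xP i j hij) * X (DVar.y k)) ∨
      (∃ (i j : Fin (m - 1)) (hij : i < j),
          g = X (DVar.xJ i) * X (DVar.xJ j) - X (DVar.xP i j hij) ^ 2 ∨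
          g = X (DVar.xJ j) * X (DVar.y i) - X (DVar.xP i j hij) * X (DVar.y j) ∨
          g = X (DVar.xP i j hij) * X (DVar.y i) - X (DVar.xJ i) * X (DVar.y j) ∨
          g = X (DVar.xP i j hij) * X DVar.x1 * X DVar.xn - X (DVar.y i) * X (DVar.y j)) ∨
      (∃ i : Fin (m - 1),
          g = X (DVar.xJ i) * X DVar.x1 * X DVar.xn - X (DVar.y i) ^ 2)}

/-- `degRevLexLT rank a b` : the exponent vector `a` is strictly smaller than `b` in the
(degree) reverse lexicographic order determined by the ranking `rank` of the variables
(smaller rank = greater variable): `a ≺ b` iff `a` has smaller total degree, or the total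
degrees agree and in the least variable (i.e. largest rank) where they differ, `a` has the
larger exponent. -/
def degRevLexLT {σ : Type*} (rank : σ → ℕ) (a b : σ →₀ ℕ) : Prop :=
  (a.sum fun _ e => e) < (b.sum fun _ e => e) ∨
    ((a.sum fun _ e => e) = (b.sum fun _ e => e) ∧
      ∃ v, b v < a v ∧ ∀ w, rank v < rank w → a w = b w)

/-- `IsLeadExp lt f d` : `d` is the exponent vector of the leading monomial of `f` with
respect to the strict term order `lt`. -/
def IsLeadExp {σ K : Type*} [Field K] (lt : (σ →₀ ℕ) → (σ →₀ ℕ) → Prop)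
    (f : MvPolynomial σ K) (d : σ →₀ ℕ) : Prop :=
  d ∈ f.support ∧ ∀ e ∈ f.support, e ≠ d → lt e d

/-- The ideal of leading monomials (initial ideal) of an ideal `I` with respect to the
strict term order `lt`. -/
noncomputable def initialIdeal {σ K : Type*} [Field K] (lt : (σ →₀ ℕ) → (σ →₀ ℕ) → Prop)
    (I : Ideal (MvPolynomial σ K)) : Ideal (MvPolynomial σ K) :=
  Ideal.span {p | ∃ f ∈ I, f ≠ 0 ∧ ∃ d, IsLeadExp lt f d ∧ p = monomial d (1 : K)}

/-- The ranking of the variables realising the variable order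
`x_1 ≻ x_2 ≻ ⋯ ≻ x_n ≻ x_{j1,j2} ≻ x_{j3,j4} ≻ y_{k1} ≻ y_{k2}` (where `x_{j1,j2} ≻ x_{j3,j4}`
iff `j2 < j4`, or `j2 = j4` and `j1 < j3`, and `y_{k1} ≻ y_{k2}` iff `k1 < k2`); a smaller
rank means a greater variable. -/
def rankD (m : ℕ) : DVar m → ℕ
  | .x1 => 1
  | .xn => 2 * m
  | .xJ t => 2 * t.val + 3
  | .xJc t => 2 * t.val + 2
  | .xP s t _ => 2 * m + 1 + t.val * (2 * m) + s.val
  | .y t => 10 * m * m + 10 * m + t.val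

/-- The reverse lexicographic term order `≻^even` (as a strict "smaller-than" relation on
exponent vectors). -/
def precEven (m : ℕ) : (DVar m →₀ ℕ) → (DVar m →₀ ℕ) → Prop :=
  degRevLexLT (rankD m)

/-- exponent vectors of the images of the variables -/
noncomputable def dExp (m : ℕ) : DVar m → (ℕ →₀ ℕ)
  | .x1 => Finsupp.single 1 2
  | .xn => Finsupp.single (2 * m) 2
  | .xJ t => Finsupp.single (2 * t.val + 3) 2
  | .xJc t => Finsupp.single (2 * t.val + 2) 1
  | .xP s t _ => Finsupp.single (2 * s.val + 3) 1 + Finsupp.single (2 * t.val + 3) 1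
  | .y t => Finsupp.single (2 * t.val + 3) 1 + Finsupp.single 1 1 + Finsupp.single (2 * m) 1

theorem dImage_eq (K : Type*) [Field K] (m : ℕ) (v : DVar m) :
    dImage K m v = monomial (dExp m v) 1 := by
  cases v <;> simp [dImage, dExp, X, monomial_pow, monomial_mul]

theorem piD_monomial (K : Type*) [Field K] (m : ℕ) (d : DVar m →₀ ℕ) (c : K) :
    piD K m (monomial d c) = monomial (Finsupp.weight (dExp m) d) c := by
  rw [piD, aeval_monomial]
  have : (d.prod fun i k => dImage K m i ^ k) = monomial (Finsupp.weight (dExp m) d) 1 := by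
    simp only [dImage_eq, monomial_pow, one_pow, Finsupp.weight_apply, Finsupp.sum,
      Finsupp.prod, monomial_sum_one]
  rw [this, algebraMap_eq, C_mul_monomial, mul_one]

/-- weights are determined by images -/
theorem weight_comp {σ : Type*} (w : σ → (ℕ →₀ ℕ)) (L : (ℕ →₀ ℕ) →+ ℕ) (d : σ →₀ ℕ) :
    L (Finsupp.weight w d) = Finsupp.weight (fun v => L (w v)) d := by
  simp [Finsupp.weight_apply, Finsupp.sum]

theorem exists_gt {σ : Type*} (c : σ → ℕ) (d e : σ →₀ ℕ)
    (h : Finsupp.weight c d = Finsupp.weight c e) (v₀ : σ) (h0 : d v₀ < e v₀) (hc : 0 < c v₀) :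
    ∃ v, e v < d v ∧ 0 < c v := by
  classical
  by_contra hcon
  push Not at hcon
  have hd := Finsupp.sum_of_support_subset d (s := d.support ∪ e.support)
    Finset.subset_union_left (fun i k => k • c i) (by simp)
  have he := Finsupp.sum_of_support_subset e (s := d.support ∪ e.support)
    Finset.subset_union_right (fun i k => k • c i) (by simp)
  rw [Finsupp.weight_apply, Finsupp.weight_apply, hd, he] at h
  refine absurd h (ne_of_lt ?_)
  apply Finset.sum_lt_sum
  · intro i _
    by_cases hi : e i < d i
    · simp [Nat.le_zero.mp (hcon i hi)]
    · simp only [smul_eq_mul]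
      exact Nat.mul_le_mul_right _ (not_lt.mp hi)
  · refine ⟨v₀, ?_, ?_⟩
    · simp only [Finset.mem_union, Finsupp.mem_support_iff]
      right; omega
    · simp only [smul_eq_mul]
      exact Nat.mul_lt_mul_of_pos_right h0 hc

theorem exists_pos {σ : Type*} (c c' : σ → ℕ) (hcc : ∀ v, c' v ≤ c v) (d e : σ →₀ ℕ)
    (h : Finsupp.weight c d = Finsupp.weight c e)
    (h' : Finsupp.weight c' d < Finsupp.weight c' e) :
    ∃ v, 0 < d v ∧ c' v < c v := by
  by_contra hcon
  push Not at hcon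
  have h1 : Finsupp.weight c d ≤ Finsupp.weight c' d := by
    simp only [Finsupp.weight_apply, Finsupp.sum, smul_eq_mul]
    refine Finset.sum_le_sum fun i hi => Nat.mul_le_mul_left _ (hcon i ?_)
    exact Nat.pos_of_ne_zero (Finsupp.mem_support_iff.mp hi)
  have h2 : Finsupp.weight c' e ≤ Finsupp.weight c e := by
    simp only [Finsupp.weight_apply, Finsupp.sum, smul_eq_mul]
    exact Finset.sum_le_sum fun i hi => Nat.mul_le_mul_left _ (hcc i)
  omega

/-- indicator of the `y` variables -/
def isY (m : ℕ) : DVar m → ℕ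
  | .y _ => 1
  | _ => 0

theorem rank_xP_lt (m : ℕ) {a b c d : Fin (m - 1)} (h : a < b) (h' : c < d) (hbd : b < d) :
    rankD m (.xP a b h) < rankD m (.xP c d h') := by
  simp only [rankD]
  have h1 : b.val + 1 ≤ d.val := hbd
  have h2 := Nat.mul_le_mul_right (2 * m) h1
  have h3 := a.isLt
  rw [Nat.add_mul] at h2
  omega

theorem rank_xP_lt' (m : ℕ) {a b c : Fin (m - 1)} (h : a < b) (h' : c < b) (hac : a < c) :
    rankD m (.xP a b h) < rankD m (.xP c b h') := by
  simp only [rankD]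
  have h1 : a.val < c.val := hac
  omega

theorem rank_xJ_xP (m : ℕ) {a c d : Fin (m - 1)} (h' : c < d) :
    rankD m (.xJ a) < rankD m (.xP c d h') := by
  simp only [rankD]
  have h3 := a.isLt
  omega

theorem rank_xP_y (m : ℕ) {a c d : Fin (m - 1)} (h' : c < d) :
    rankD m (.xP c d h') < rankD m (.y a) := by
  simp only [rankD]
  have h3 := c.isLt
  have h4 := d.isLt
  have h2 : d.val * (2 * m) ≤ m * (2 * m) := Nat.mul_le_mul_right _ (by omega)
  have h5 : c.val < m := by omega
  nlinarith

theorem rank_xJ_y (m : ℕ) {a c : Fin (m - 1)} :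
    rankD m (.xJ c) < rankD m (.y a) := by
  simp only [rankD]
  have h3 : c.val + 2 ≤ m := by have := c.isLt; omega
  nlinarith

theorem rank_y_y (m : ℕ) {a c : Fin (m - 1)} (h : a < c) :
    rankD m (.y a) < rankD m (.y c) := by
  simp only [rankD]
  have h3 : a.val < c.val := h
  omega

/-- the target set of leading monomials -/
def leadSet (K : Type*) [Field K] (m : ℕ) : Set (MvPolynomial (DVar m) K) :=
  {p | ∃ g ∈ GD K m, ∃ d, IsLeadExp (precEven m) g d ∧ p = monomial d (1 : K)}

theorem mem_of_le (K : Type*) [Field K] (m : ℕ) (a b d : DVar m →₀ ℕ)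
    (hg : monomial a (1 : K) - monomial b 1 ∈ GD K m)
    (hab : a ≠ b) (hlt : precEven m b a) (had : a ≤ d) :
    monomial d (1 : K) ∈ Ideal.span (leadSet K m) := by
  classical
  have hl : monomial a (1 : K) ∈ leadSet K m := by
    refine ⟨_, hg, a, ⟨?_, ?_⟩, rfl⟩
    · simp [mem_support_iff, coeff_monomial, hab.symm]
    · intro e he hea
      have : e = b := by
        by_contra hb
        apply mem_support_iff.mp he
        simp [coeff_monomial, Ne.symm hea, Ne.symm hb]
      rwa [this]
  have : monomial d (1 : K) = monomial (d - a) 1 * monomial a 1 := by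
    rw [monomial_mul, tsub_add_cancel_of_le had, one_mul]
  rw [this]
  exact Ideal.mul_mem_left _ _ (Ideal.subset_span hl)

theorem mem_quad (K : Type*) [Field K] (m : ℕ) (d : DVar m →₀ ℕ) (p q r s : DVar m)
    (hg : (X p * X q - X r * X s : MvPolynomial (DVar m) K) ∈ GD K m)
    (hps : rankD m p < rankD m s) (hqs : rankD m q < rankD m s) (hrs : rankD m r ≤ rankD m s)
    (hpq : p ≠ q) (hp : 0 < d p) (hq : 0 < d q) :
    monomial d (1 : K) ∈ Ideal.span (leadSet K m) := by
  classical
  have h1 : p ≠ s := fun h => by rw [h] at hps; omega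
  have h2 : q ≠ s := fun h => by rw [h] at hqs; omega
  refine mem_of_le K m (Finsupp.single p 1 + Finsupp.single q 1)
    (Finsupp.single r 1 + Finsupp.single s 1) d ?_ ?_ ?_ ?_
  · simpa [X, monomial_mul] using hg
  · intro h
    have := DFunLike.congr_fun h s
    simp [Finsupp.single_apply, h1, h2] at this
  · right
    refine ⟨?_, s, ?_, ?_⟩
    · simp [Finsupp.sum_add_index']
    · simp [Finsupp.single_apply, h1, h2]
    · intro w hw
      have e1 : p ≠ w := fun h => by subst h; omega
      have e2 : q ≠ w := fun h => by subst h; omega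
      have e3 : r ≠ w := fun h => by subst h; omega
      have e4 : s ≠ w := fun h => by subst h; omega
      simp [Finsupp.single_apply, e1, e2, e3, e4]
  · intro v
    by_cases hv : p = v
    · subst hv
      simp [Finsupp.single_apply, Ne.symm hpq]; omega
    · by_cases hv' : q = v
      · subst hv'
        simp [Finsupp.single_apply, hpq]; omega
      · simp [Finsupp.single_apply, hv, hv']

theorem mem_cub (K : Type*) [Field K] (m : ℕ) (d : DVar m →₀ ℕ) (p q t r s : DVar m)
    (hg : (X p * X q * X t - X r * X s : MvPolynomial (DVar m) K) ∈ GD K m)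
    (hpq : p ≠ q) (hpt : p ≠ t) (hqt : q ≠ t) (hp : 0 < d p) (hq : 0 < d q) (ht : 0 < d t) :
    monomial d (1 : K) ∈ Ideal.span (leadSet K m) := by
  classical
  have hdeg : ((Finsupp.single r 1 + Finsupp.single s 1 : DVar m →₀ ℕ).sum fun _ e => e)
      < ((Finsupp.single p 1 + Finsupp.single q 1 + Finsupp.single t 1 : DVar m →₀ ℕ).sum
        fun _ e => e) := by
    simp [Finsupp.sum_add_index']
  refine mem_of_le K m (Finsupp.single p 1 + Finsupp.single q 1 + Finsupp.single t 1)
    (Finsupp.single r 1 + Finsupp.single s 1) d ?_ ?_ ?_ ?_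
  · simpa [X, monomial_mul] using hg
  · intro h
    rw [h] at hdeg
    omega
  · exact Or.inl hdeg
  · intro v
    by_cases hv : p = v
    · subst hv
      simp [Finsupp.single_apply, Ne.symm hpq, Ne.symm hpt]; omega
    · by_cases hv' : q = v
      · subst hv'
        simp [Finsupp.single_apply, hpq, Ne.symm hqt]; omega
      · by_cases hv2 : t = v
        · subst hv2
          simp [Finsupp.single_apply, hpt, hqt]; omega
        · simp [Finsupp.single_apply, hv, hv', hv2]

section rules
variable (K : Type*) [Field K] (m : ℕ) (d : DVar m →₀ ℕ)

theorem r1 {i j k l : Fin (m - 1)} (hij : i < j) (hjk : j < k) (hkl : k < l) (h1 : i < k)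
    (h2 : j < l) (hp : 0 < d (.xP i k h1)) (hq : 0 < d (.xP j l h2)) :
    monomial d (1 : K) ∈ Ideal.span (leadSet K m) :=
  mem_quad K m d _ _ (.xP i j hij) (.xP k l hkl)
    (Or.inl ⟨i, j, k, l, hij, hjk, hkl, Or.inl rfl⟩)
    (rank_xP_lt m _ _ hkl) (rank_xP_lt' m _ _ hjk) (rank_xP_lt m _ _ (hjk.trans hkl)).le
    (by simp [hij.ne]) hp hq

theorem r2 {i j k l : Fin (m - 1)} (hij : i < j) (hjk : j < k) (hkl : k < l) (h1 : i < l)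
    (hp : 0 < d (.xP i l h1)) (hq : 0 < d (.xP j k hjk)) :
    monomial d (1 : K) ∈ Ideal.span (leadSet K m) :=
  mem_quad K m d _ _ (.xP i j hij) (.xP k l hkl)
    (Or.inl ⟨i, j, k, l, hij, hjk, hkl, Or.inr rfl⟩)
    (rank_xP_lt' m _ _ (hij.trans hjk)) (rank_xP_lt m _ _ hkl)
    (rank_xP_lt m _ _ (hjk.trans hkl)).le
    (by simp [hij.ne]) hp hq

theorem r3 {i j k : Fin (m - 1)} (hij : i < j) (hjk : j < k) (h1 : i < k)
    (hp : 0 < d (.xP i j hij)) (hq : 0 < d (.xP i k h1)) :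
    monomial d (1 : K) ∈ Ideal.span (leadSet K m) :=
  mem_quad K m d _ _ (.xJ i) (.xP j k hjk)
    (Or.inr (Or.inl ⟨i, j, k, hij, hjk, Or.inl rfl⟩))
    (rank_xP_lt m _ _ hjk) (rank_xP_lt' m _ _ hij) (rank_xJ_xP m _).le
    (by simp [hjk.ne]) hp hq

theorem r4 {i j k : Fin (m - 1)} (hij : i < j) (hjk : j < k) (h1 : i < k)
    (hp : 0 < d (.xJ j)) (hq : 0 < d (.xP i k h1)) :
    monomial d (1 : K) ∈ Ideal.span (leadSet K m) :=
  mem_quad K m d _ _ (.xP i j hij) (.xP j k hjk)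
    (Or.inr (Or.inl ⟨i, j, k, hij, hjk, Or.inr (Or.inl rfl)⟩))
    (rank_xJ_xP m _) (rank_xP_lt' m _ _ hij) (rank_xP_lt m _ _ hjk).le
    (by simp) hp hq

theorem r5 {i j k : Fin (m - 1)} (hij : i < j) (hjk : j < k)
    (hp : 0 < d (.xJ k)) (hq : 0 < d (.xP i j hij)) :
    monomial d (1 : K) ∈ Ideal.span (leadSet K m) :=
  mem_quad K m d _ _ (.xP i k (hij.trans hjk)) (.xP j k hjk)
    (Or.inr (Or.inl ⟨i, j, k, hij, hjk, Or.inr (Or.inr (Or.inl rfl))⟩))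
    (rank_xJ_xP m _) (rank_xP_lt m _ _ hjk) (rank_xP_lt' m _ _ hij).le
    (by simp) hp hq

theorem r6 {i j k : Fin (m - 1)} (hij : i < j) (hjk : j < k)
    (hp : 0 < d (.xP j k hjk)) (hq : 0 < d (.y i)) :
    monomial d (1 : K) ∈ Ideal.span (leadSet K m) :=
  mem_quad K m d _ _ (.xP i j hij) (.y k)
    (Or.inr (Or.inl ⟨i, j, k, hij, hjk, Or.inr (Or.inr (Or.inr (Or.inl rfl)))⟩))
    (rank_xP_y m _) (rank_y_y m (hij.trans hjk)) (rank_xP_y m _).le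
    (by simp) hp hq

theorem r7 {i j k : Fin (m - 1)} (hij : i < j) (hjk : j < k) (h1 : i < k)
    (hp : 0 < d (.xP i k h1)) (hq : 0 < d (.y j)) :
    monomial d (1 : K) ∈ Ideal.span (leadSet K m) :=
  mem_quad K m d _ _ (.xP i j hij) (.y k)
    (Or.inr (Or.inl ⟨i, j, k, hij, hjk, Or.inr (Or.inr (Or.inr (Or.inr rfl)))⟩))
    (rank_xP_y m _) (rank_y_y m hjk) (rank_xP_y m _).le
    (by simp) hp hq

theorem r8 {i j : Fin (m - 1)} (hij : i < j)
    (hp : 0 < d (.xJ i)) (hq : 0 < d (.xJ j)) :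
    monomial d (1 : K) ∈ Ideal.span (leadSet K m) :=
  mem_quad K m d _ _ (.xP i j hij) (.xP i j hij)
    (Or.inr (Or.inr (Or.inl ⟨i, j, hij, Or.inl (by rw [pow_two])⟩)))
    (rank_xJ_xP m _) (rank_xJ_xP m _) le_rfl
    (by simp [hij.ne]) hp hq

theorem r9 {i j : Fin (m - 1)} (hij : i < j)
    (hp : 0 < d (.xJ j)) (hq : 0 < d (.y i)) :
    monomial d (1 : K) ∈ Ideal.span (leadSet K m) :=
  mem_quad K m d _ _ (.xP i j hij) (.y j)
    (Or.inr (Or.inr (Or.inl ⟨i, j, hij, Or.inr (Or.inl rfl)⟩)))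
    (rank_xJ_y m) (rank_y_y m hij) (rank_xP_y m _).le
    (by simp) hp hq

theorem r10 {i j : Fin (m - 1)} (hij : i < j)
    (hp : 0 < d (.xP i j hij)) (hq : 0 < d (.y i)) :
    monomial d (1 : K) ∈ Ideal.span (leadSet K m) :=
  mem_quad K m d _ _ (.xJ i) (.y j)
    (Or.inr (Or.inr (Or.inl ⟨i, j, hij, Or.inr (Or.inr (Or.inl rfl))⟩)))
    (rank_xP_y m _) (rank_y_y m hij) (rank_xJ_y m).le
    (by simp) hp hq

theorem r11 {i j : Fin (m - 1)} (hij : i < j)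
    (hp : 0 < d (.xP i j hij)) (hq : 0 < d .x1) (hr : 0 < d .xn) :
    monomial d (1 : K) ∈ Ideal.span (leadSet K m) :=
  mem_cub K m d _ _ _ (.y i) (.y j)
    (Or.inr (Or.inr (Or.inl ⟨i, j, hij, Or.inr (Or.inr (Or.inr rfl))⟩)))
    (by simp) (by simp) (by simp) hp hq hr

theorem r12 {i : Fin (m - 1)}
    (hp : 0 < d (.xJ i)) (hq : 0 < d .x1) (hr : 0 < d .xn) :
    monomial d (1 : K) ∈ Ideal.span (leadSet K m) :=
  mem_cub K m d _ _ _ (.y i) (.y i)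
    (Or.inr (Or.inr (Or.inr ⟨i, by rw [pow_two]⟩)))
    (by simp) (by simp) (by simp) hp hq hr

/-- `y_s` together with a pair whose larger element exceeds `s` -/
theorem rY {s a b : Fin (m - 1)} (hab : a < b) (hsb : s < b)
    (hp : 0 < d (.xP a b hab)) (hq : 0 < d (.y s)) :
    monomial d (1 : K) ∈ Ideal.span (leadSet K m) := by
  rcases lt_trichotomy s a with h | h | h
  · exact r6 K m d h hab hp hq
  · subst h; exact r10 K m d hab hp hq
  · exact r7 K m d h hsb hab hp hq

end rules

theorem GD_subset_ker (K : Type*) [Field K] (m : ℕ) (g : MvPolynomial (DVar m) K)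
    (hg : g ∈ GD K m) : g ∈ RingHom.ker (piD K m) := by
  rw [RingHom.mem_ker]
  rcases hg with ⟨i, j, k, l, hij, hjk, hkl, h | h⟩ | ⟨i, j, k, hij, hjk, h | h | h | h | h⟩ |
    ⟨i, j, hij, h | h | h | h⟩ | ⟨i, h⟩ <;>
  · subst h
    simp only [piD, map_sub, map_mul, map_pow, aeval_X, dImage]
    ring

/-- The heart: a non-minimal element of a fibre is divisible by a leading monomial. -/
theorem key (K : Type*) [Field K] (m : ℕ) (d e : DVar m →₀ ℕ)
    (hφ : Finsupp.weight (dExp m) d = Finsupp.weight (dExp m) e) (hlt : precEven m e d) :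
    monomial d (1 : K) ∈ Ideal.span (leadSet K m) := by
  classical
  have hL : ∀ L : (ℕ →₀ ℕ) →+ ℕ, Finsupp.weight (fun v => L (dExp m v)) d
      = Finsupp.weight (fun v => L (dExp m v)) e := fun L => by
    rw [← weight_comp, ← weight_comp, hφ]
  have hco : ∀ i : ℕ, Finsupp.weight (fun v => dExp m v i) d
      = Finsupp.weight (fun v => dExp m v i) e := fun i => hL (Finsupp.applyAddHom i)
  -- relation between degree, number of `y` and the image
  have hdeg : ∀ f : DVar m →₀ ℕ, Finsupp.weight (fun v => Finsupp.weight
      (fun i : ℕ => if i % 2 = 1 ∨ i = 2 * m then 1 else 2) (dExp m v)) f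
      = 2 * (f.sum fun _ k => k) + Finsupp.weight (isY m) f := by
    intro f
    simp only [Finsupp.weight_apply _ f, Finsupp.sum, Finset.mul_sum, ← Finset.sum_add_distrib]
    refine Finset.sum_congr rfl fun v _ => ?_
    have : Finsupp.weight
      (fun i : ℕ => if i % 2 = 1 ∨ i = 2 * m then 1 else 2) (dExp m v) = 2 + isY m v := by
      cases v with
      | x1 => simp [dExp, isY, Finsupp.weight_single]
      | xn => simp [dExp, isY, Finsupp.weight_single]
      | xJ t =>
        simp [dExp, isY, Finsupp.weight_single]
      | xJc t =>
        have := t.isLt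
        simp [dExp, isY, Finsupp.weight_single]
        omega
      | xP s t h =>
        have h1 : (2 * s.val + 3) % 2 = 1 := by omega
        have h2 : (2 * t.val + 3) % 2 = 1 := by omega
        simp [dExp, isY, Finsupp.weight_single, h1, h2]
      | y t =>
        have h2 : (2 * t.val + 3) % 2 = 1 := by omega
        simp [dExp, isY, Finsupp.weight_single, h2]
    rw [this]
    simp only [smul_eq_mul]
    ring
  have hY : 2 * (d.sum fun _ k => k) + Finsupp.weight (isY m) d
      = 2 * (e.sum fun _ k => k) + Finsupp.weight (isY m) e := by
    rw [← hdeg, ← hdeg]; exact hL _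
  rcases hlt with hlt | ⟨heq, v, hv, hw⟩
  · have hYlt : Finsupp.weight (isY m) d < Finsupp.weight (isY m) e := by omega
    have hx1 : 0 < d .x1 := by
      obtain ⟨v, hv, hc⟩ := exists_pos _ _ (fun v => by
        cases v <;> simp [isY, dExp]) d e (hco 1) hYlt
      cases v with
      | x1 => exact hv
      | xn => simp [dExp, isY, Finsupp.single_apply] at hc <;> (split_ifs at hc <;> omega)
      | xJ t => simp [dExp, isY, Finsupp.single_apply] at hc
      | xJc t => simp [dExp, isY, Finsupp.single_apply] at hc
      | xP s t h => simp [dExp, isY, Finsupp.single_apply] at hc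
      | y t => simp [dExp, isY, Finsupp.single_apply] at hc <;> (split_ifs at hc <;> omega)
    have hxn : 0 < d .xn := by
      obtain ⟨v, hv, hc⟩ := exists_pos _ _ (fun v => by
        cases v <;> simp [isY, dExp]) d e (hco (2 * m)) hYlt
      cases v with
      | x1 => simp [dExp, isY, Finsupp.single_apply] at hc <;> (split_ifs at hc <;> omega)
      | xn => exact hv
      | xJ t => simp [dExp, isY, Finsupp.single_apply] at hc <;> (split_ifs at hc <;> omega)
      | xJc t =>
        have := t.isLt
        simp [dExp, isY, Finsupp.single_apply] at hc <;> (split_ifs at hc <;> omega)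
      | xP s t h =>
        have h1 : 2 * s.val + 3 ≠ 2 * m := by omega
        have h2 : 2 * t.val + 3 ≠ 2 * m := by omega
        simp [dExp, isY, Finsupp.single_apply, h1, h2] at hc
      | y t =>
        have h1 : 1 ≠ 2 * m := by omega
        have h2 : 2 * t.val + 3 ≠ 2 * m := by omega
        simp [dExp, isY, Finsupp.single_apply, h1, h2] at hc
    have hval : ∀ v : DVar m, Finsupp.weight
        (fun i : ℕ => if i % 2 = 1 ∧ i ≠ 1 then 1 else 0) (dExp m v) =
        match v with
        | .x1 => 0
        | .xn => 0
        | .xJ _ => 2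
        | .xJc _ => 0
        | .xP _ _ _ => 2
        | .y _ => 1 := by
      intro v
      cases v with
      | x1 => simp [dExp, Finsupp.weight_single]
      | xn => simp [dExp, Finsupp.weight_single]
      | xJ t =>
        have h2 : (2 * t.val + 3) % 2 = 1 := by omega
        simp [dExp, Finsupp.weight_single, h2]
      | xJc t =>
        simp [dExp, Finsupp.weight_single]
      | xP s t h =>
        have h1 : (2 * s.val + 3) % 2 = 1 := by omega
        have h2 : (2 * t.val + 3) % 2 = 1 := by omega
        simp [dExp, Finsupp.weight_single, h1, h2]
      | y t =>
        have h2 : (2 * t.val + 3) % 2 = 1 := by omega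
        simp [dExp, Finsupp.weight_single, h2]
    obtain ⟨v, hv, hc⟩ := exists_pos _ _ (fun v => by
        rw [hval]; cases v <;> simp [isY]) d e
        (hL (Finsupp.weight (fun i : ℕ => if i % 2 = 1 ∧ i ≠ 1 then 1 else 0))) hYlt
    rw [hval] at hc
    cases v with
    | x1 => simp [isY] at hc
    | xn => simp [isY] at hc
    | xJ t => exact r12 K m d hv hx1 hxn
    | xJc t => simp [isY] at hc
    | xP s t h => exact r11 K m d h hv hx1 hxn
    | y t => simp [isY] at hc
  · have hYeq : Finsupp.weight (isY m) d = Finsupp.weight (isY m) e := by omega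
    have hno : ∀ u : DVar m, e u < d u → ¬ rankD m v < rankD m u := fun u hu hr => by
      have := hw u hr; omega
    -- variables involving a given element `t` of `J`
    have hJ : ∀ t : Fin (m - 1), ∀ u : DVar m, 0 < dExp m u (2 * t.val + 3) →
        u = .xJ t ∨ u = .y t ∨ (∃ s h, u = .xP s t h) ∨ (∃ s h, u = .xP t s h) := by
      intro t u hu
      have := t.isLt
      cases u with
      | x1 => simp [dExp, Finsupp.single_apply] at hu
      | xn => simp [dExp, Finsupp.single_apply] at hu <;> (split_ifs at hu <;> omega)
      | xJ s => simp [dExp, Finsupp.single_apply] at hu; left; congr 1; exact Fin.ext (by by_contra hne; simp [hne] at hu)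
      | xJc s => simp [dExp, Finsupp.single_apply] at hu <;> (split_ifs at hu <;> omega)
      | xP a b h =>
        by_cases h1 : a = t
        · subst h1; right; right; right; exact ⟨_, _, rfl⟩
        · by_cases h2 : b = t
          · subst h2; right; right; left; exact ⟨_, _, rfl⟩
          · have h1' : a.val ≠ t.val := fun h => h1 (Fin.ext h)
            have h2' : b.val ≠ t.val := fun h => h2 (Fin.ext h)
            simp [dExp, Finsupp.single_apply, h1', h2'] at hu
      | y s =>
        have h1 : 2 * m ≠ 2 * t.val + 3 := by omega
        simp [dExp, Finsupp.single_apply, h1] at hu; right; left; congr 1; exact Fin.ext (by by_contra hne; simp [hne] at hu)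
    cases v with
    | x1 =>
      obtain ⟨u, hu, hc⟩ := exists_gt _ d e (hco 1) _ hv (by simp [dExp])
      have hr := hno u hu
      cases u with
      | x1 => omega
      | xn => simp [dExp, Finsupp.single_apply] at hc <;> (split_ifs at hc <;> omega)
      | xJ t => simp [dExp, Finsupp.single_apply] at hc
      | xJc t => simp [dExp, Finsupp.single_apply] at hc
      | xP s t h => simp [dExp, Finsupp.single_apply] at hc
      | y t => exact absurd ((show _ < _ from by simp [rankD]).trans (rank_xJ_y m (c := t) (a := t))) hr
    | xn =>
      obtain ⟨u, hu, hc⟩ := exists_gt _ d e (hco (2 * m)) _ hv (by simp [dExp])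
      have hr := hno u hu
      cases u with
      | x1 => simp [dExp, Finsupp.single_apply] at hc <;> (split_ifs at hc <;> omega)
      | xn => omega
      | xJ t => simp [dExp, Finsupp.single_apply] at hc <;> (split_ifs at hc <;> omega)
      | xJc t =>
        have := t.isLt
        simp [dExp, Finsupp.single_apply] at hc <;> (split_ifs at hc <;> omega)
      | xP s t h => simp [rankD] at hr; omega
      | y t =>
        have h1 : t.val + 2 ≤ m := by have := t.isLt; omega
        simp [rankD] at hr; nlinarith
    | xJ t =>
      obtain ⟨u, hu, hc⟩ := exists_gt _ d e (hco (2 * t.val + 3)) _ hv (by simp [dExp])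
      have hr := hno u hu
      rcases hJ t u hc with rfl | rfl | ⟨s, h, rfl⟩ | ⟨s, h, rfl⟩
      · omega
      · exact absurd (rank_xJ_y m) hr
      · exact absurd (rank_xJ_xP m _) hr
      · exact absurd (rank_xJ_xP m _) hr
    | xJc t =>
      have := t.isLt
      obtain ⟨u, hu, hc⟩ := exists_gt _ d e (hco (2 * t.val + 2)) _ hv (by simp [dExp])
      have hr := hno u hu
      cases u with
      | x1 => simp [dExp, Finsupp.single_apply] at hc
      | xn => simp [dExp, Finsupp.single_apply] at hc <;> (split_ifs at hc <;> omega)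
      | xJ s => simp [dExp, Finsupp.single_apply] at hc <;> (split_ifs at hc <;> omega)
      | xJc s =>
        simp [dExp, Finsupp.single_apply] at hc
        have : s = t := Fin.ext (by by_contra hne; simp [hne] at hc)
        subst this; omega
      | xP a b h =>
        have h1 : 2 * a.val + 3 ≠ 2 * t.val + 2 := by omega
        have h2 : 2 * b.val + 3 ≠ 2 * t.val + 2 := by omega
        simp [dExp, Finsupp.single_apply, h1, h2] at hc
      | y s =>
        have h1 : 2 * s.val + 3 ≠ 2 * t.val + 2 := by omega
        have h2 : 2 * m ≠ 2 * t.val + 2 := by omega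
        simp [dExp, Finsupp.single_apply, h1, h2] at hc
    | xP s t hst =>
      obtain ⟨u, hu, hc⟩ := exists_gt _ d e (hco (2 * t.val + 3)) _ hv (by simp [dExp])
      have hru := hno u hu
      obtain ⟨z, hz, hc'⟩ := exists_gt _ d e (hco (2 * s.val + 3)) _ hv (by simp [dExp])
      have hrz := hno z hz
      have hu0 : 0 < d u := by omega
      have hz0 : 0 < d z := by omega
      -- classify `u`
      have hu' : u = .xJ t ∨ ∃ a h, a < s ∧ u = .xP a t h := by
        rcases hJ t u hc with rfl | rfl | ⟨a, h, rfl⟩ | ⟨b, h, rfl⟩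
        · left; rfl
        · exact absurd (rank_xP_y m _) hru
        · right
          refine ⟨a, h, ?_, rfl⟩
          rcases lt_trichotomy a s with h1 | h1 | h1
          · exact h1
          · subst h1; omega
          · exact absurd (rank_xP_lt' m _ _ h1) hru
        · exact absurd (rank_xP_lt m _ _ h) hru
      have hz' : z = .xJ s ∨ (∃ a h, z = .xP a s h) ∨ ∃ b h, b < t ∧ z = .xP s b h := by
        rcases hJ s z hc' with rfl | rfl | ⟨a, h, rfl⟩ | ⟨b, h, rfl⟩
        · left; rfl
        · exact absurd (rank_xP_y m _) hrz
        · right; left; exact ⟨a, h, rfl⟩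
        · right; right
          refine ⟨b, h, ?_, rfl⟩
          rcases lt_trichotomy b t with h1 | h1 | h1
          · exact h1
          · subst h1; omega
          · exact absurd (rank_xP_lt m _ _ h1) hrz
      rcases hu' with rfl | ⟨a, hat, has, rfl⟩
      · rcases hz' with rfl | ⟨b, hbs, rfl⟩ | ⟨b, hsb, hbt, rfl⟩
        · exact r8 K m d hst hz0 hu0
        · exact r5 K m d hbs hst hu0 hz0
        · exact r5 K m d hsb hbt hu0 hz0
      · rcases hz' with rfl | ⟨b, hbs, rfl⟩ | ⟨b, hsb, hbt, rfl⟩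
        · exact r4 K m d has hst hat hz0 hu0
        · rcases lt_trichotomy a b with h1 | h1 | h1
          · exact r2 K m d h1 hbs hst hat hu0 hz0
          · subst h1
            exact r3 K m d hbs hst hat hz0 hu0
          · exact r1 K m d h1 has hst hbs hat hz0 hu0
        · exact r2 K m d has hsb hbt hat hu0 hz0
    | y t =>
      obtain ⟨u, hu, hc⟩ := exists_gt _ d e hYeq _ hv (by simp [isY])
      have hru := hno u hu
      obtain ⟨s, rfl⟩ : ∃ s, u = .y s := by
        cases u <;> simp [isY] at hc ⊢
      have hs : s < t := by
        rcases lt_trichotomy s t with h1 | h1 | h1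
        · exact h1
        · subst h1; omega
        · exact absurd (rank_y_y m h1) hru
      have hs0 : 0 < d (.y s) := by omega
      obtain ⟨z, hz, hc'⟩ := exists_gt _ d e (hco (2 * t.val + 3)) _ hv (by simp [dExp])
      have hz0 : 0 < d z := by omega
      rcases hJ t z hc' with rfl | rfl | ⟨a, h, rfl⟩ | ⟨b, h, rfl⟩
      · exact r9 K m d hs hz0 hs0
      · omega
      · exact rY K m d h hs hz0 hs0
      · exact rY K m d h (hs.trans h) hz0 hs0

/-- A nonzero term of a kernel element shares its fibre with another term. -/
theorem exists_fibre (K : Type*) [Field K] (m : ℕ) (f : MvPolynomial (DVar m) K)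
    (hf : f ∈ RingHom.ker (piD K m)) (d : DVar m →₀ ℕ) (hd : d ∈ f.support) :
    ∃ e ∈ f.support, e ≠ d ∧ Finsupp.weight (dExp m) d = Finsupp.weight (dExp m) e := by
  classical
  by_contra hcon
  push Not at hcon
  have h0 : piD K m f = 0 := hf
  have h1 : coeff (Finsupp.weight (dExp m) d) (piD K m f) = coeff d f := by
    conv_lhs => rw [f.as_sum]
    rw [map_sum, coeff_sum, Finset.sum_eq_single d]
    · rw [piD_monomial, coeff_monomial, if_pos rfl]
    · intro e he hed
      rw [piD_monomial, coeff_monomial, if_neg (hcon e he hed).symm]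
    · intro h; exact absurd hd h
  rw [h0, coeff_zero] at h1
  exact mem_support_iff.mp hd h1.symm

/-- `𝒢_{D_{2m}}` is a Gröbner basis of `I_{D_{2m}}` with respect to `≻^even`:
the ideal generated by the `≻^even`-leading monomials of all nonzero elements of
`I_{D_{2m}}` equals the ideal generated by the `≻^even`-leading monomials of the elements
of `𝒢_{D_{2m}}`. -/
theorem GD_is_groebner (K : Type*) [Field K] (m : ℕ) (hm : 2 ≤ m) :
    initialIdeal (precEven m) (RingHom.ker (piD K m)) =
      Ideal.span {p : MvPolynomial (DVar m) K |
        ∃ g ∈ GD K m, ∃ d, IsLeadExp (precEven m) g d ∧ p = monomial d (1 : K)} := by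
  apply le_antisymm
  · refine Ideal.span_le.mpr ?_
    rintro p ⟨f, hf, _, d, ⟨hd, hlt⟩, rfl⟩
    obtain ⟨e, he, hed, hφ⟩ := exists_fibre K m f hf d hd
    exact key K m d e hφ (hlt e he hed)
  · refine Ideal.span_mono ?_
    rintro p ⟨g, hg, d, hd, rfl⟩
    refine ⟨g, GD_subset_ker K m g hg, ?_, d, hd, rfl⟩
    rintro rfl
    simpa using hd.1
end

section
/- The Krull dimension of the quotient ring R/I_{D_{2m}} (equivalently, of the semigroup ring K[ℕD_{2m}], the image of π) equals 2m; consequently the codimension of the toric variety V_{D_{2m}}, i.e. the number of variables of R minus this dimension, equals (m−1) + C(m−1,2). -/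
open MvPolynomial

theorem krull_integral {A B : Type*} [CommRing A] [CommRing B] [Algebra A B]
    [IsDomain B] [Algebra.IsIntegral A B] (hinj : Function.Injective (algebraMap A B)) :
    ringKrullDim A = ringKrullDim B := by
  apply le_antisymm
  · refine iSup_le fun l => ?_
    obtain ⟨Q, hQ, hQc⟩ := Ideal.exists_ideal_over_prime_of_isIntegral_of_isDomain (S := B)
      l.head.asIdeal (by rw [(RingHom.injective_iff_ker_eq_bot _).1 hinj]; exact bot_le)
    have : Q.LiesOver l.head.asIdeal := ⟨hQc.symm⟩
    obtain ⟨L, hL, -⟩ := Ideal.exists_ltSeries_of_hasGoingUp l Q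
    rw [← hL]
    exact Order.LTSeries.length_le_krullDim L
  · refine Order.krullDim_le_of_strictMono (PrimeSpectrum.comap (algebraMap A B)) ?_
    intro p q h
    exact Ideal.IsIntegral.comap_lt_comap (R := A) (I := p.asIdeal) (J := q.asIdeal) h

theorem card_DVar (m : ℕ) (hm : 2 ≤ m) :
    Nat.card (DVar m) = 2 + 3 * (m - 1) + Nat.choose (m - 1) 2 := by
  let e : DVar m ≃ (Unit ⊕ Unit) ⊕ (Fin (m-1) ⊕ Fin (m-1) ⊕ Fin (m-1)) ⊕
      (Σ t : Fin (m-1), Fin t.val) :=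
    { toFun := fun
        | .x1 => .inl (.inl ())
        | .xn => .inl (.inr ())
        | .xJ t => .inr (.inl (.inl t))
        | .xJc t => .inr (.inl (.inr (.inl t)))
        | .y t => .inr (.inl (.inr (.inr t)))
        | .xP s t h => .inr (.inr ⟨t, ⟨s.val, h⟩⟩)
      invFun := fun
        | .inl (.inl ()) => .x1
        | .inl (.inr ()) => .xn
        | .inr (.inl (.inl t)) => .xJ t
        | .inr (.inl (.inr (.inl t))) => .xJc t
        | .inr (.inl (.inr (.inr t))) => .y t
        | .inr (.inr ⟨t, s⟩) => .xP ⟨s.val, s.isLt.trans t.isLt⟩ t s.isLt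
      left_inv := by rintro (_ | _ | _ | _ | _ | _) <;> rfl
      right_inv := by rintro ((_ | _) | (_ | _ | _) | _) <;> rfl }
  rw [Nat.card_congr e]
  simp only [Nat.card_eq_fintype_card, Fintype.card_sum, Fintype.card_sigma, Fintype.card_fin,
    Fintype.card_unit]
  rw [Fin.sum_univ_eq_sum_range (fun i => i) (m-1), Finset.sum_range_id, Nat.choose_two_right]
  ring

theorem krull_part (K : Type*) [Field K] (m : ℕ) (hm : 2 ≤ m) :
    ringKrullDim (MvPolynomial (DVar m) K ⧸ RingHom.ker (piD K m)) = (2 * m : ℕ) := by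
  let S := supported K (Set.Icc 1 (2 * m))
  have hX : ∀ i, 1 ≤ i → i ≤ 2 * m → (X i : MvPolynomial ℕ K) ∈ S := fun i h1 h2 =>
    X_mem_supported.2 ⟨h1, h2⟩
  have himg : ∀ v, dImage K m v ∈ S := by
    have aux : ∀ t : Fin (m-1), 2 * t.val + 3 ≤ 2 * m := fun t => by omega
    rintro (_ | _ | t | t | ⟨s, t, h⟩ | t) <;> simp only [dImage]
    · exact pow_mem (hX _ (by omega) (by omega)) _
    · exact pow_mem (hX _ (by omega) (by omega)) _
    · exact pow_mem (hX _ (by omega) (by omega)) _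
    · exact hX _ (by omega) (by omega)
    · exact mul_mem (hX _ (by omega) (by have := aux s; omega)) (hX _ (by omega) (by omega))
    · exact mul_mem (mul_mem (hX _ (by omega) (by omega)) (hX _ (by omega) (by omega)))
        (hX _ (by omega) (by omega))
  let φ : MvPolynomial (DVar m) K →ₐ[K] S := aeval fun v => ⟨dImage K m v, himg v⟩
  have hφ : S.val.comp φ = piD K m := by
    ext v
    simp [φ, piD]
  have hker : RingHom.ker (piD K m) = RingHom.ker φ := by
    ext p
    rw [RingHom.mem_ker, RingHom.mem_ker, ← hφ]
    simp
  rw [hker]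
  let ψ := Ideal.kerLiftAlg φ
  have hψ : Function.Injective ψ := Ideal.kerLiftAlg_injective φ
  letI : Algebra (MvPolynomial (DVar m) K ⧸ RingHom.ker φ) S := ψ.toRingHom.toAlgebra
  have hint : ∀ v, ∀ x : S, x.val ^ 2 = dImage K m v →
      IsIntegral (MvPolynomial (DVar m) K ⧸ RingHom.ker φ) x := by
    intro v x hx
    apply IsIntegral.of_pow (n := 2) (by norm_num)
    have : x ^ 2 = algebraMap (MvPolynomial (DVar m) K ⧸ RingHom.ker φ) S
        (Ideal.Quotient.mk _ (X v)) := by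
      apply Subtype.ext
      change x.val ^ 2 = (φ (X v)).val
      simp [φ, hx]
    rw [this]
    exact isIntegral_algebraMap
  have : Algebra.IsIntegral (MvPolynomial (DVar m) K ⧸ RingHom.ker φ) S := by
    have hXi : ∀ i (h : i ∈ Set.Icc 1 (2 * m)),
        IsIntegral (MvPolynomial (DVar m) K ⧸ RingHom.ker φ) (⟨X i, hX i h.1 h.2⟩ : S) := by
      rintro i ⟨h1, h2⟩
      obtain rfl | h1' := eq_or_ne i 1
      · exact hint .x1 _ rfl
      obtain rfl | h2' := eq_or_ne i (2 * m)
      · exact hint .xn _ rfl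
      obtain ⟨t, ht⟩ := Nat.even_or_odd' i
      rcases ht with ht | ht
      · have : (⟨X i, hX i h1 h2⟩ : S) = algebraMap (MvPolynomial (DVar m) K ⧸ RingHom.ker φ) S
            (Ideal.Quotient.mk _ (X (.xJc ⟨t - 1, by omega⟩))) := by
          apply Subtype.ext
          change X i = (φ (X _)).val
          simp only [φ, aeval_X, dImage]
          congr 1
          omega
        rw [this]
        exact isIntegral_algebraMap
      · refine hint (.xJ ⟨t - 1, by omega⟩) _ ?_
        simp only [dImage]
        congr 2
        omega
    constructor
    rintro ⟨x, hx⟩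
    induction hx using Algebra.adjoin_induction with
    | mem x hx =>
      obtain ⟨i, hi, rfl⟩ := hx
      exact hXi i hi
    | algebraMap r =>
      have : (⟨algebraMap K _ r, S.algebraMap_mem r⟩ : S) =
          algebraMap (MvPolynomial (DVar m) K ⧸ RingHom.ker φ) S
            (algebraMap K _ r) := (ψ.commutes r).symm
      exact this ▸ isIntegral_algebraMap
    | add x y hx hy h1 h2 => exact IsIntegral.add (x := (⟨x, hx⟩ : S)) (y := (⟨y, hy⟩ : S)) h1 h2
    | mul x y hx hy h1 h2 => exact IsIntegral.mul (x := (⟨x, hx⟩ : S)) (y := (⟨y, hy⟩ : S)) h1 h2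
  have hdim := krull_integral
    (A := MvPolynomial (DVar m) K ⧸ RingHom.ker φ) (B := S) hψ
  rw [hdim,
    ringKrullDim_eq_of_ringEquiv (supportedEquivMvPolynomial (R := K) (Set.Icc 1 (2 * m))).toRingEquiv,
    MvPolynomial.ringKrullDim_of_isNoetherianRing, ringKrullDim_eq_zero_of_field]
  simp

/-- the Krull dimension of `R/I_{D_{2m}}` equals `2m`, and consequently the
codimension of the toric variety `V_{D_{2m}}`, i.e. the number of variables of `R` minus
this dimension, equals `(m−1) + C(m−1,2)`. -/
theorem dim_VD (K : Type*) [Field K] (m : ℕ) (hm : 2 ≤ m) :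
    ringKrullDim (MvPolynomial (DVar m) K ⧸ RingHom.ker (piD K m)) = (2 * m : ℕ) ∧
      Nat.card (DVar m) - 2 * m = (m - 1) + Nat.choose (m - 1) 2 := by
  refine ⟨krull_part K m hm, ?_⟩
  rw [card_DVar m hm]
  omega
end

section
/- The ideal of R generated by the set 𝒢_{D_{2m+1}} equals the toric ideal I_{D_{2m+1}} = ker π. -/
open MvPolynomial

/-- Index type for the variables of the polynomial ring `R` in the `D_{2m+1}` case
(`n = 2m+1`).  The set `J = {2,4,…,n-1}` of even integers is realised as
`{2t+2 | t : Fin m}` and `J^c = {3,5,…,n-2}` as `{2t+3 | t : Fin (m-1)}`.  The constructors: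
`x1 ↦ x_1`, `xn ↦ x_n`, `xJ t ↦ x_{2t+2}` (`2t+2 ∈ J`), `xJc t ↦ x_{2t+3}` (`2t+3 ∈ J^c`),
`xP s t _ ↦ x_{2s+2,2t+2}` (a pair `k < ℓ` in `J`), `x1n ↦ x_{1,n}`,
`xK1 t ↦ x_{2t+2,1}`, `xKn t ↦ x_{2t+2,n}`, `yK1 t ↦ y_{2t+2,1}`, `yKn t ↦ y_{2t+2,n}`. -/
inductive DoVar (m : ℕ) : Type where
  | x1 : DoVar m
  | xn : DoVar m
  | xJ : Fin m → DoVar m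
  | xJc : Fin (m - 1) → DoVar m
  | xP : (s t : Fin m) → s < t → DoVar m
  | x1n : DoVar m
  | xK1 : Fin m → DoVar m
  | xKn : Fin m → DoVar m
  | yK1 : Fin m → DoVar m
  | yKn : Fin m → DoVar m

/-- The images of the variables under `π`, where `u_i = X i` inside
`K[u_1,…,u_n] ⊆ MvPolynomial ℕ K` and `n = 2m+1`:
`π(x_i) = u_i²` (`i ∈ J`), `π(x_j) = u_j` (`j ∈ J^c`), `π(x_1) = u_1⁴`, `π(x_n) = u_n⁴`,
`π(x_{k,ℓ}) = u_k u_ℓ` (`k < ℓ` in `J`), `π(x_{1,n}) = u_1 u_n`, `π(x_{i,1}) = u_i u_1²`,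
`π(x_{i,n}) = u_i u_n²`, `π(y_{i,1}) = u_i u_1³ u_n`, `π(y_{i,n}) = u_i u_1 u_n³`. -/
noncomputable def doImage (K : Type*) [Field K] (m : ℕ) : DoVar m → MvPolynomial ℕ K
  | .x1 => X 1 ^ 4
  | .xn => X (2 * m + 1) ^ 4
  | .xJ t => X (2 * t.val + 2) ^ 2
  | .xJc t => X (2 * t.val + 3)
  | .xP s t _ => X (2 * s.val + 2) * X (2 * t.val + 2)
  | .x1n => X 1 * X (2 * m + 1)
  | .xK1 t => X (2 * t.val + 2) * X 1 ^ 2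
  | .xKn t => X (2 * t.val + 2) * X (2 * m + 1) ^ 2
  | .yK1 t => X (2 * t.val + 2) * X 1 ^ 3 * X (2 * m + 1)
  | .yKn t => X (2 * t.val + 2) * X 1 * X (2 * m + 1) ^ 3

/-- The toric map `π : R → K[u_1,…,u_n]` for the `D_{2m+1}` configuration. -/
noncomputable def piDo (K : Type*) [Field K] (m : ℕ) :
    MvPolynomial (DoVar m) K →ₐ[K] MvPolynomial ℕ K :=
  aeval (doImage K m)

/-- The set `𝒢_{D_{2m+1}}` of binomials. -/
noncomputable def GDo (K : Type*) [Field K] (m : ℕ) : Set (MvPolynomial (DoVar m) K) :=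
  {g | (∃ (i j k l : Fin m) (hij : i < j) (hjk : j < k) (hkl : k < l),
          g = X (DoVar.xP i k (hij.trans hjk)) * X (DoVar.xP j l (hjk.trans hkl))
              - X (DoVar.xP i j hij) * X (DoVar.xP k l hkl) ∨
          g = X (DoVar.xP i l (hij.trans (hjk.trans hkl))) * X (DoVar.xP j k hjk)
              - X (DoVar.xP i j hij) * X (DoVar.xP k l hkl)) ∨
      (∃ (i j k : Fin m) (hij : i < j) (hjk : j < k),
          g = X (DoVar.xP j k hjk) * X (DoVar.xK1 i)
              - X (DoVar.xP i j hij) * X (DoVar.xK1 k) ∨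
          g = X (DoVar.xP i k (hij.trans hjk)) * X (DoVar.xK1 j)
              - X (DoVar.xP i j hij) * X (DoVar.xK1 k) ∨
          g = X (DoVar.xP j k hjk) * X (DoVar.xKn i)
              - X (DoVar.xP i j hij) * X (DoVar.xKn k) ∨
          g = X (DoVar.xP i k (hij.trans hjk)) * X (DoVar.xKn j)
              - X (DoVar.xP i j hij) * X (DoVar.xKn k) ∨
          g = X (DoVar.xJ j) * X (DoVar.xP i k (hij.trans hjk))
              - X (DoVar.xP i j hij) * X (DoVar.xP j k hjk) ∨
          g = X (DoVar.xP i j hij) * X (DoVar.xP i k (hij.trans hjk))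
              - X (DoVar.xJ i) * X (DoVar.xP j k hjk) ∨
          g = X (DoVar.xJ k) * X (DoVar.xP i j hij)
              - X (DoVar.xP i k (hij.trans hjk)) * X (DoVar.xP j k hjk)) ∨
      (∃ (i j : Fin m) (hij : i < j),
          g = X (DoVar.xJ i) * X (DoVar.xJ j) - X (DoVar.xP i j hij) ^ 2 ∨
          g = X (DoVar.xP i j hij) * X DoVar.x1 - X (DoVar.xK1 i) * X (DoVar.xK1 j) ∨
          g = X (DoVar.xP i j hij) * X DoVar.xn - X (DoVar.xKn i) * X (DoVar.xKn j) ∨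
          g = X (DoVar.xP i j hij) * X (DoVar.xK1 i) - X (DoVar.xJ i) * X (DoVar.xK1 j) ∨
          g = X (DoVar.xP i j hij) * X (DoVar.xKn i) - X (DoVar.xJ i) * X (DoVar.xKn j) ∨
          g = X (DoVar.xJ j) * X (DoVar.xK1 i) - X (DoVar.xP i j hij) * X (DoVar.xK1 j) ∨
          g = X (DoVar.xJ j) * X (DoVar.xKn i) - X (DoVar.xP i j hij) * X (DoVar.xKn j) ∨
          g = X (DoVar.xK1 j) * X (DoVar.xKn i) - X (DoVar.xK1 i) * X (DoVar.xKn j) ∨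
          g = X (DoVar.xK1 i) * X (DoVar.xKn j) - X DoVar.x1n ^ 2 * X (DoVar.xP i j hij)) ∨
      (∃ i : Fin m,
          g = X (DoVar.xJ i) * X DoVar.x1 - X (DoVar.xK1 i) ^ 2 ∨
          g = X (DoVar.xJ i) * X DoVar.xn - X (DoVar.xKn i) ^ 2 ∨
          g = X (DoVar.xK1 i) * X (DoVar.xKn i) - X DoVar.x1n ^ 2 * X (DoVar.xJ i) ∨
          g = X (DoVar.xKn i) * X DoVar.x1 - X DoVar.x1n ^ 2 * X (DoVar.xK1 i) ∨
          g = X (DoVar.yK1 i) - X DoVar.x1n * X (DoVar.xK1 i) ∨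
          g = X (DoVar.yKn i) - X DoVar.x1n * X (DoVar.xKn i) ∨
          g = X (DoVar.xK1 i) * X DoVar.xn - X DoVar.x1n ^ 2 * X (DoVar.xKn i)) ∨
      g = X DoVar.x1 * X DoVar.xn - X DoVar.x1n ^ 4}


namespace DoAux

/-- Product of `w` over consecutive pairs of a list; `0` on lists of odd length. -/
def pairProd {V Q : Type*} [CommRing Q] (w : V → V → Q) : List V → Q
  | [] => 1
  | [_] => 0
  | a :: b :: l => w a b * pairProd w l

theorem pairProd_perm {V Q : Type*} [CommRing Q] (w : V → V → Q)
    (hs : ∀ a b, w a b = w b a) (hx : ∀ a b c d, w a b * w c d = w a c * w b d)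
    {l₁ l₂ : List V} (h : l₁.Perm l₂) :
    (∀ c, pairProd w (c :: l₁) = pairProd w (c :: l₂)) ∧ pairProd w l₁ = pairProd w l₂ := by
  induction h with
  | nil => simp
  | cons a _ ih =>
    refine ⟨fun c => ?_, ih.1 a⟩
    simp only [pairProd, ih.2]
  | swap a b l =>
    refine ⟨fun c => ?_, ?_⟩
    · cases l with
      | nil => simp [pairProd]
      | cons d l =>
        simp only [pairProd]
        rw [← mul_assoc, ← mul_assoc, hx]
    · simp only [pairProd]
      rw [hs]
  | trans _ _ ih₁ ih₂ => exact ⟨fun c => (ih₁.1 c).trans (ih₂.1 c), ih₁.2.trans ih₂.2⟩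

theorem exists_mprod {V Q : Type*} [CommRing Q] (w : V → V → Q)
    (hs : ∀ a b, w a b = w b a) (hx : ∀ a b c d, w a b * w c d = w a c * w b d) :
    ∃ F : Multiset V → Q, F 0 = 1 ∧ ∀ a b M, F (a ::ₘ b ::ₘ M) = w a b * F M := by
  refine ⟨Quotient.lift (pairProd w) (fun a b h => (pairProd_perm w hs hx h).2), rfl, ?_⟩
  intro a b M
  induction M using Quotient.inductionOn
  rfl

/-- Full exchange for a symmetric function from the relations on sorted indices. -/
theorem exch {ι Q : Type*} [LinearOrder ι] [CommRing Q] (q : ι → ι → Q)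
    (hs : ∀ a b, q a b = q b a)
    (h : ∀ i j k l, i ≤ j → j ≤ k → k ≤ l →
      q i k * q j l = q i j * q k l ∧ q i l * q j k = q i j * q k l)
    (i j k l : ι) : q i j * q k l = q i k * q j l := by
  rcases le_total i j with h0 | h0 <;>
  rcases le_total i k with h1 | h1 <;> rcases le_total i l with h2 | h2 <;>
  rcases le_total j k with h3 | h3 <;> rcases le_total j l with h4 | h4 <;>
  rcases le_total k l with h5 | h5 <;> grind


theorem exch_vec {ι Q : Type*} [LinearOrder ι] [CommRing Q] (q : ι → ι → Q) (a : ι → Q)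
    (hs : ∀ i j, q i j = q j i)
    (h3 : ∀ i j k, i < j → j < k → q j k * a i = q i j * a k ∧ q i k * a j = q i j * a k)
    (h2 : ∀ i j, i < j → q i j * a i = q i i * a j ∧ q j j * a i = q i j * a j)
    (i j k : ι) : q i j * a k = q i k * a j := by
  rcases lt_trichotomy i j with h | h | h <;> rcases lt_trichotomy j k with hh2 | hh2 | hh2 <;>
    rcases lt_trichotomy i k with hh3 | hh3 | hh3 <;> grind

/-- The Veronese weight. `none` is `u_1²`, `some none` is `u_n²`, `some (some i)` is `u_i`. -/
def wt {ι Q : Type*} [CommRing Q] (q : ι → ι → Q) (a b : ι → Q) (x z p : Q) :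
    Option (Option ι) → Option (Option ι) → Q
  | none, none => x
  | none, some none => p ^ 2
  | none, some (some i) => a i
  | some none, none => p ^ 2
  | some none, some none => z
  | some none, some (some i) => b i
  | some (some i), none => a i
  | some (some i), some none => b i
  | some (some i), some (some j) => q i j

theorem wt_symm {ι Q : Type*} [CommRing Q] (q : ι → ι → Q) (a b : ι → Q) (x z p : Q)
    (hs : ∀ i j, q i j = q j i) (s t : Option (Option ι)) :
    wt q a b x z p s t = wt q a b x z p t s := by
  rcases s with _ | _ | s <;> rcases t with _ | _ | t <;> (simp only [wt]; try exact hs _ _)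

theorem wt_exch {ι Q : Type*} [CommRing Q] (q : ι → ι → Q) (a b : ι → Q) (x z p : Q)
    (hs : ∀ i j, q i j = q j i) (hq : ∀ i j k l, q i j * q k l = q i k * q j l)
    (ha : ∀ i j k, q i j * a k = q i k * a j) (hb : ∀ i j k, q i j * b k = q i k * b j)
    (hax : ∀ i j, q i j * x = a i * a j) (hbz : ∀ i j, q i j * z = b i * b j)
    (hab : ∀ i j, a i * b j = p ^ 2 * q i j)
    (hbx : ∀ i, b i * x = p ^ 2 * a i) (haz : ∀ i, a i * z = p ^ 2 * b i)
    (hxz : x * z = p ^ 4) (s t u v : Option (Option ι)) :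
    wt q a b x z p s t * wt q a b x z p u v = wt q a b x z p s u * wt q a b x z p t v := by
  rcases s with _ | _ | s <;> rcases t with _ | _ | t <;> rcases u with _ | _ | u <;>
    rcases v with _ | _ | v <;> simp only [wt] <;> grind

/-- Normal form of a monomial: `M` is the part in `J`, `α, β` the exponents of `u_1, u_n`. -/
def nf {ι Q : Type*} [CommRing Q] (p : Q) (F : Multiset (Option (Option ι)) → Q)
    (M : Multiset (Option (Option ι))) (α β : ℕ) : Q :=
  if α % 2 = β % 2 then
    p ^ (α % 2) * F (M + Multiset.replicate (α / 2) none + Multiset.replicate (β / 2) (some none))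
  else 0

section
variable {ι Q : Type*} [CommRing Q] (p : Q) (F : Multiset (Option (Option ι)) → Q)
  (w : Option (Option ι) → Option (Option ι) → Q)

theorem nf_JJ (hF : ∀ a b M, F (a ::ₘ b ::ₘ M) = w a b * F M)
    (s t : Option (Option ι)) (M : Multiset (Option (Option ι))) (α β : ℕ) :
    nf p F (s ::ₘ t ::ₘ M) α β = w s t * nf p F M α β := by
  unfold nf
  split_ifs
  · simp only [Multiset.cons_add, hF]; ring
  · simp

theorem nf_J1 (hF : ∀ a b M, F (a ::ₘ b ::ₘ M) = w a b * F M)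
    (s : Option (Option ι)) (M : Multiset (Option (Option ι))) (α β : ℕ) :
    nf p F (s ::ₘ M) (α + 2) β = w s none * nf p F M α β := by
  unfold nf
  have h1 : (α + 2) / 2 = α / 2 + 1 := by omega
  rw [h1, Nat.add_mod_right]
  split_ifs
  · simp only [Multiset.cons_add, Multiset.add_cons, Multiset.replicate_succ]
    rw [Multiset.cons_swap, hF]; ring
  · simp

theorem nf_Jn (hF : ∀ a b M, F (a ::ₘ b ::ₘ M) = w a b * F M)
    (s : Option (Option ι)) (M : Multiset (Option (Option ι))) (α β : ℕ) :
    nf p F (s ::ₘ M) α (β + 2) = w s (some none) * nf p F M α β := by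
  unfold nf
  have h1 : (β + 2) / 2 = β / 2 + 1 := by omega
  rw [h1, Nat.add_mod_right]
  split_ifs
  · simp only [Multiset.cons_add, Multiset.add_cons, Multiset.replicate_succ]
    rw [Multiset.cons_swap, hF]; ring
  · simp

theorem nf_11 (hF : ∀ a b M, F (a ::ₘ b ::ₘ M) = w a b * F M)
    (M : Multiset (Option (Option ι))) (α β : ℕ) :
    nf p F M (α + 4) β = w none none * nf p F M α β := by
  unfold nf
  have h1 : (α + 4) / 2 = α / 2 + 1 + 1 := by omega
  have h2 : (α + 4) % 2 = α % 2 := by omega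
  rw [h1, h2]
  split_ifs
  · simp only [Multiset.cons_add, Multiset.add_cons, Multiset.replicate_succ, hF]; ring
  · simp

theorem nf_nn (hF : ∀ a b M, F (a ::ₘ b ::ₘ M) = w a b * F M)
    (M : Multiset (Option (Option ι))) (α β : ℕ) :
    nf p F M α (β + 4) = w (some none) (some none) * nf p F M α β := by
  unfold nf
  have h1 : (β + 4) / 2 = β / 2 + 1 + 1 := by omega
  have h2 : (β + 4) % 2 = β % 2 := by omega
  rw [h1, h2]
  split_ifs
  · simp only [Multiset.cons_add, Multiset.add_cons, Multiset.replicate_succ, hF]; ring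
  · simp

theorem nf_1n (hF : ∀ a b M, F (a ::ₘ b ::ₘ M) = w a b * F M)
    (hp : w (some none) none = p ^ 2) (M : Multiset (Option (Option ι))) (α β : ℕ) :
    nf p F M (α + 1) (β + 1) = p * nf p F M α β := by
  unfold nf
  by_cases h : α % 2 = β % 2
  · have hh2 : (α + 1) % 2 = (β + 1) % 2 := by omega
    rw [if_pos h, if_pos hh2]
    rcases Nat.mod_two_eq_zero_or_one α with h0 | h0
    · have h1 : (α + 1) / 2 = α / 2 := by omega
      have h2 : (β + 1) / 2 = β / 2 := by omega
      have h3 : (α + 1) % 2 = 1 := by omega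
      rw [h1, h2, h3, h0]; ring
    · have h1 : (α + 1) / 2 = α / 2 + 1 := by omega
      have h2 : (β + 1) / 2 = β / 2 + 1 := by omega
      have h3 : (α + 1) % 2 = 0 := by omega
      rw [h1, h2, h3, h0]
      simp only [Multiset.cons_add, Multiset.add_cons, Multiset.replicate_succ, hF, hp]; ring
  · have hh2 : ¬ (α + 1) % 2 = (β + 1) % 2 := by omega
    rw [if_neg h, if_neg hh2, mul_zero]

end

/-- The part of an exponent vector supported on `J`. -/
def Jpart (m : ℕ) (d : ℕ →₀ ℕ) : Multiset (Option (Option (Fin m))) :=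
  ∑ t : Fin m, Multiset.replicate (d (2 * t.val + 2)) (some (some t))

theorem Jpart_add (m : ℕ) (d e : ℕ →₀ ℕ) : Jpart m (d + e) = Jpart m d + Jpart m e := by
  simp [Jpart, Multiset.replicate_add, Finset.sum_add_distrib]

theorem Jpart_J (m : ℕ) (s : Fin m) : Jpart m (Finsupp.single (2 * s.val + 2) 1) = {some (some s)} := by
  unfold Jpart
  rw [Finset.sum_eq_single s]
  · simp
  · intro t _ hts
    have : 2 * s.val + 2 ≠ 2 * t.val + 2 := by
      intro h; apply hts; ext; omega
    rw [Finsupp.single_eq_of_ne' this]; simp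
  · simp

theorem Jpart_odd (m : ℕ) (s k : ℕ) : Jpart m (Finsupp.single (2 * s + 1) k) = 0 := by
  unfold Jpart
  apply Finset.sum_eq_zero
  intro t _
  rw [Finsupp.single_eq_of_ne' (by omega)]; simp

/-- The part of an exponent vector supported on `J^c`. -/
def cpart {Q : Type*} [CommRing Q] (m : ℕ) (c : Fin (m - 1) → Q) (d : ℕ →₀ ℕ) : Q :=
  ∏ t : Fin (m - 1), c t ^ d (2 * t.val + 3)

theorem cpart_add {Q : Type*} [CommRing Q] (m : ℕ) (c : Fin (m - 1) → Q) (d e : ℕ →₀ ℕ) :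
    cpart m c (d + e) = cpart m c d * cpart m c e := by
  simp [cpart, pow_add, Finset.prod_mul_distrib]

theorem cpart_c {Q : Type*} [CommRing Q] (m : ℕ) (c : Fin (m - 1) → Q) (s : Fin (m - 1)) :
    cpart m c (Finsupp.single (2 * s.val + 3) 1) = c s := by
  unfold cpart
  rw [Finset.prod_eq_single s]
  · simp
  · intro t _ hts
    have : 2 * s.val + 3 ≠ 2 * t.val + 3 := by
      intro h; apply hts; ext; omega
    rw [Finsupp.single_eq_of_ne' this]; simp
  · simp

theorem cpart_other {Q : Type*} [CommRing Q] (m : ℕ) (c : Fin (m - 1) → Q) (s k : ℕ)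
    (h : ∀ t : Fin (m - 1), s ≠ 2 * t.val + 3) :
    cpart m c (Finsupp.single s k) = 1 := by
  unfold cpart
  apply Finset.prod_eq_one
  intro t _
  rw [Finsupp.single_eq_of_ne' (h t)]; simp

/-- The symmetric extension of the variables `x_{i,j}`, `x_i`. -/
def qf {m : ℕ} {Q : Type*} (g : DoVar m → Q) (i j : Fin m) : Q :=
  if h : i < j then g (.xP i j h) else if h : j < i then g (.xP j i h) else g (.xJ i)

theorem qf_symm {m : ℕ} {Q : Type*} (g : DoVar m → Q) (i j : Fin m) : qf g i j = qf g j i := by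
  rcases lt_trichotomy i j with h | rfl | h
  · simp [qf, h, h.asymm]
  · rfl
  · simp [qf, h, h.asymm]

theorem qf_lt {m : ℕ} {Q : Type*} (g : DoVar m → Q) {i j : Fin m} (h : i < j) :
    qf g i j = g (.xP i j h) := by simp [qf, h]

theorem qf_self {m : ℕ} {Q : Type*} (g : DoVar m → Q) (i : Fin m) :
    qf g i i = g (.xJ i) := by simp [qf]

/-- The exponent vector of the image of a variable. -/
noncomputable def ex (m : ℕ) : DoVar m → (ℕ →₀ ℕ)
  | .x1 => Finsupp.single 1 4
  | .xn => Finsupp.single (2 * m + 1) 4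
  | .xJ t => Finsupp.single (2 * t.val + 2) 1 + Finsupp.single (2 * t.val + 2) 1
  | .xJc t => Finsupp.single (2 * t.val + 3) 1
  | .xP s t _ => Finsupp.single (2 * s.val + 2) 1 + Finsupp.single (2 * t.val + 2) 1
  | .x1n => Finsupp.single 1 1 + Finsupp.single (2 * m + 1) 1
  | .xK1 t => Finsupp.single (2 * t.val + 2) 1 + Finsupp.single 1 2
  | .xKn t => Finsupp.single (2 * t.val + 2) 1 + Finsupp.single (2 * m + 1) 2
  | .yK1 t => Finsupp.single (2 * t.val + 2) 1 + Finsupp.single 1 3 + Finsupp.single (2 * m + 1) 1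
  | .yKn t => Finsupp.single (2 * t.val + 2) 1 + Finsupp.single 1 1 + Finsupp.single (2 * m + 1) 3

theorem doImage_eq (K : Type*) [Field K] (m : ℕ) (v : DoVar m) :
    doImage K m v = monomial (ex m v) 1 := by
  cases v <;> simp only [doImage, ex, X, monomial_pow, monomial_mul, one_pow, mul_one,
    Finsupp.smul_single, smul_eq_mul]
  rw [← Finsupp.single_add]

end DoAux

open DoAux in
/-- Abstract form: the existence of a retraction onto the quotient. -/
theorem DoAux.exists_retract (m : ℕ) {Q : Type*} [CommRing Q]
    (g : DoVar m → Q)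
    (hq : ∀ i j k l, qf g i j * qf g k l = qf g i k * qf g j l)
    (ha : ∀ i j k, qf g i j * g (.xK1 k) = qf g i k * g (.xK1 j))
    (hb : ∀ i j k, qf g i j * g (.xKn k) = qf g i k * g (.xKn j))
    (hax : ∀ i j, qf g i j * g .x1 = g (.xK1 i) * g (.xK1 j))
    (hbz : ∀ i j, qf g i j * g .xn = g (.xKn i) * g (.xKn j))
    (hab : ∀ i j, g (.xK1 i) * g (.xKn j) = g .x1n ^ 2 * qf g i j)
    (hbx : ∀ i, g (.xKn i) * g .x1 = g .x1n ^ 2 * g (.xK1 i))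
    (haz : ∀ i, g (.xK1 i) * g .xn = g .x1n ^ 2 * g (.xKn i))
    (hxz : g .x1 * g .xn = g .x1n ^ 4)
    (hy1 : ∀ i, g (.yK1 i) = g .x1n * g (.xK1 i))
    (hyn : ∀ i, g (.yKn i) = g .x1n * g (.xKn i)) (hm : 2 ≤ m) :
    ∃ N : (ℕ →₀ ℕ) → Q, N 0 = 1 ∧ ∀ v d, N (d + ex m v) = g v * N d := by
  set w := wt (qf g) (fun i => g (.xK1 i)) (fun i => g (.xKn i)) (g .x1) (g .xn) (g .x1n) with hw
  obtain ⟨F, hF0, hF⟩ := exists_mprod w (wt_symm _ _ _ _ _ _ (qf_symm g))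
    (wt_exch _ _ _ _ _ _ (qf_symm g) hq ha hb hax hbz hab hbx haz hxz)
  set p := g .x1n with hp
  have hwp : w (some none) none = p ^ 2 := rfl
  have hJc1 : ∀ k, cpart m (fun t => g (.xJc t)) (Finsupp.single 1 k) = 1 :=
    fun k => cpart_other m _ _ _ (by intro t; omega)
  have hJcn : ∀ k, cpart m (fun t => g (.xJc t)) (Finsupp.single (2 * m + 1) k) = 1 :=
    fun k => cpart_other m _ _ _ (by intro t; have := t.2; omega)
  have hJcJ : ∀ (s : Fin m) k, cpart m (fun t => g (.xJc t)) (Finsupp.single (2 * s.val + 2) k) = 1 :=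
    fun s k => cpart_other m _ _ _ (by intro t; omega)
  have hJ1 : ∀ k, Jpart m (Finsupp.single 1 k) = 0 := Jpart_odd m 0
  have hJn : ∀ k, Jpart m (Finsupp.single (2 * m + 1) k) = 0 := Jpart_odd m m
  have hJc : ∀ s k, Jpart m (Finsupp.single (2 * s + 3) k) = 0 := fun s => Jpart_odd m (s + 1)
  have e1n : ∀ k, (Finsupp.single 1 k : ℕ →₀ ℕ) (2 * m + 1) = 0 :=
    fun k => Finsupp.single_eq_of_ne' (by omega)
  have en1 : ∀ k, (Finsupp.single (2 * m + 1) k : ℕ →₀ ℕ) 1 = 0 :=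
    fun k => Finsupp.single_eq_of_ne' (by omega)
  have eJ1 : ∀ (s : Fin m) k, (Finsupp.single (2 * s.val + 2) k : ℕ →₀ ℕ) 1 = 0 :=
    fun s k => Finsupp.single_eq_of_ne' (by omega)
  have eJn : ∀ (s : Fin m) k, (Finsupp.single (2 * s.val + 2) k : ℕ →₀ ℕ) (2 * m + 1) = 0 :=
    fun s k => Finsupp.single_eq_of_ne' (by omega)
  have ec1 : ∀ (s : Fin (m - 1)) k, (Finsupp.single (2 * s.val + 3) k : ℕ →₀ ℕ) 1 = 0 :=
    fun s k => Finsupp.single_eq_of_ne' (by omega)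
  have ecn : ∀ (s : Fin (m - 1)) k,
      (Finsupp.single (2 * s.val + 3) k : ℕ →₀ ℕ) (2 * m + 1) = 0 :=
    fun s k => Finsupp.single_eq_of_ne' (by have := s.2; omega)
  have cons1 : ∀ (M : Multiset (Option (Option (Fin m)))) s, M + {s} = s ::ₘ M := by
    intro M s; rw [add_comm, Multiset.singleton_add]
  have cons2 : ∀ (M : Multiset (Option (Option (Fin m)))) s t, M + (t ::ₘ {s}) = s ::ₘ t ::ₘ M := by
    intro M s t; rw [Multiset.add_cons, cons1, Multiset.cons_swap]
  refine ⟨fun d => nf p F (Jpart m d) (d 1) (d (2 * m + 1)) * cpart m (fun t => g (.xJc t)) d,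
    ?_, ?_⟩
  · simp [nf, Jpart, cpart, hF0]
  · intro v d
    cases v <;> simp only [ex, Jpart_add, cpart_add, Jpart_J, cpart_c, hJc1, hJcn, hJcJ, hJ1, hJn,
      hJc, Finsupp.add_apply, Finsupp.single_eq_same, e1n, en1, eJ1, eJn, ec1, ecn, add_zero,
      zero_add, mul_one, cons1, cons2]
    · rw [nf_11 p F w hF, ← mul_assoc]; rfl
    · rw [nf_nn p F w hF, ← mul_assoc]; rfl
    · rw [nf_JJ p F w hF, ← mul_assoc, ← qf_self g]; rfl
    · ring
    · rename_i h
      rw [nf_JJ p F w hF, ← mul_assoc, ← qf_lt g h]; rfl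
    · rw [nf_1n p F w hF hwp, ← mul_assoc]
    · rw [nf_J1 p F w hF, ← mul_assoc]; rfl
    · rw [nf_Jn p F w hF, ← mul_assoc]; rfl
    · rename_i i
      rw [show d 1 + 3 = d 1 + 2 + 1 from rfl, nf_1n p F w hF hwp, nf_J1 p F w hF, hy1,
        mul_assoc, mul_assoc, mul_assoc]; rfl
    · rename_i i
      rw [show d (2 * m + 1) + 3 = d (2 * m + 1) + 2 + 1 from rfl, nf_1n p F w hF hwp,
        nf_Jn p F w hF, hyn, mul_assoc, mul_assoc, mul_assoc]; rfl

open DoAux in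
theorem DoAux.ker_le (K : Type*) [Field K] (m : ℕ) (I : Ideal (MvPolynomial (DoVar m) K))
    (N : (ℕ →₀ ℕ) → MvPolynomial (DoVar m) K ⧸ I) (h0 : N 0 = 1)
    (hN : ∀ v d, N (d + ex m v) = Ideal.Quotient.mk I (X v) * N d) :
    RingHom.ker (piDo K m) ≤ I := by
  let L : MvPolynomial ℕ K →ₗ[K] MvPolynomial (DoVar m) K ⧸ I :=
    (basisMonomials ℕ K).constr K N
  have hL : ∀ d, L (monomial d 1) = N d := by
    intro d
    have := (basisMonomials ℕ K).constr_basis K N d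
    simpa using this
  have key : ∀ f : MvPolynomial (DoVar m) K, ∀ q, L (piDo K m f * q) = Ideal.Quotient.mk I f * L q := by
    intro f
    induction f using MvPolynomial.induction_on with
    | C a =>
      intro q
      have h1 : piDo K m (C a) * q = a • q := by
        rw [piDo, aeval_C, Algebra.smul_def]
      have h2 : Ideal.Quotient.mk I (C a) * L q = a • L q := by
        obtain ⟨r, hr⟩ := Ideal.Quotient.mk_surjective (L q)
        rw [← hr, ← map_mul, ← smul_eq_C_mul]; rfl
      rw [h1, h2, map_smul]
    | add f g hf hg =>
      intro q
      rw [map_add, add_mul, map_add, hf, hg, map_add, add_mul]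
    | mul_X f v hf =>
      intro q
      rw [map_mul (piDo K m), mul_assoc, hf, map_mul (Ideal.Quotient.mk I), mul_assoc]
      congr 1
      have hX : piDo K m (X v) = monomial (ex m v) 1 := by
        rw [piDo, aeval_X, doImage_eq]
      rw [hX]
      induction q using MvPolynomial.induction_on' with
      | monomial d a =>
        have h1 : (monomial d a : MvPolynomial ℕ K) = a • monomial d 1 := by
          rw [smul_monomial, smul_eq_mul, mul_one]
        rw [h1, mul_smul_comm, map_smul, map_smul, monomial_mul, mul_one, hL, hL, add_comm, hN,
          mul_smul_comm]
      | add p q hp hq => rw [mul_add, map_add, map_add, hp, hq, mul_add]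
  intro f hf
  have := key f 1
  rw [RingHom.mem_ker] at hf
  rw [hf, zero_mul, map_zero] at this
  have h1 : L 1 = 1 := by rw [← h0, ← hL]; rfl
  rw [h1, mul_one] at this
  exact Ideal.Quotient.eq_zero_iff_mem.1 this.symm

open DoAux in
theorem DoAux.exists_retract_rel (m : ℕ) {Q : Type*} [CommRing Q] (g : DoVar m → Q)
    (r4 : ∀ i j k l, i < j → j < k → k < l →
      qf g i k * qf g j l = qf g i j * qf g k l ∧ qf g i l * qf g j k = qf g i j * qf g k l)
    (r3 : ∀ i j k, i < j → j < k →
      qf g j k * g (.xK1 i) = qf g i j * g (.xK1 k) ∧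
      qf g i k * g (.xK1 j) = qf g i j * g (.xK1 k) ∧
      qf g j k * g (.xKn i) = qf g i j * g (.xKn k) ∧
      qf g i k * g (.xKn j) = qf g i j * g (.xKn k) ∧
      qf g j j * qf g i k = qf g i j * qf g j k ∧
      qf g i j * qf g i k = qf g i i * qf g j k ∧
      qf g k k * qf g i j = qf g i k * qf g j k)
    (r2 : ∀ i j, i < j →
      qf g i i * qf g j j = qf g i j ^ 2 ∧
      qf g i j * g .x1 = g (.xK1 i) * g (.xK1 j) ∧
      qf g i j * g .xn = g (.xKn i) * g (.xKn j) ∧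
      qf g i j * g (.xK1 i) = qf g i i * g (.xK1 j) ∧
      qf g i j * g (.xKn i) = qf g i i * g (.xKn j) ∧
      qf g j j * g (.xK1 i) = qf g i j * g (.xK1 j) ∧
      qf g j j * g (.xKn i) = qf g i j * g (.xKn j) ∧
      g (.xK1 j) * g (.xKn i) = g (.xK1 i) * g (.xKn j) ∧
      g (.xK1 i) * g (.xKn j) = g .x1n ^ 2 * qf g i j)
    (r1 : ∀ i,
      qf g i i * g .x1 = g (.xK1 i) ^ 2 ∧
      qf g i i * g .xn = g (.xKn i) ^ 2 ∧
      g (.xK1 i) * g (.xKn i) = g .x1n ^ 2 * qf g i i ∧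
      g (.xKn i) * g .x1 = g .x1n ^ 2 * g (.xK1 i) ∧
      g (.yK1 i) = g .x1n * g (.xK1 i) ∧
      g (.yKn i) = g .x1n * g (.xKn i) ∧
      g (.xK1 i) * g .xn = g .x1n ^ 2 * g (.xKn i))
    (r0 : g .x1 * g .xn = g .x1n ^ 4) (hm : 2 ≤ m) :
    ∃ N : (ℕ →₀ ℕ) → Q, N 0 = 1 ∧ ∀ v d, N (d + ex m v) = g v * N d := by
  have hs := qf_symm g
  have hq : ∀ i j k l, qf g i j * qf g k l = qf g i k * qf g j l := by
    apply exch _ hs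
    intro i j k l h1 h2 h3
    rcases h1.eq_or_lt with rfl | h1 <;> rcases h2.eq_or_lt with rfl | h2 <;>
      rcases h3.eq_or_lt with rfl | h3 <;> grind
  have ha : ∀ i j k, qf g i j * g (.xK1 k) = qf g i k * g (.xK1 j) :=
    exch_vec (qf g) (fun i => g (.xK1 i)) hs
      (fun i j k h1 h2 => ⟨(r3 i j k h1 h2).1, (r3 i j k h1 h2).2.1⟩)
      (fun i j h => ⟨(r2 i j h).2.2.2.1, (r2 i j h).2.2.2.2.2.1⟩)
  have hb : ∀ i j k, qf g i j * g (.xKn k) = qf g i k * g (.xKn j) :=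
    exch_vec (qf g) (fun i => g (.xKn i)) hs
      (fun i j k h1 h2 => ⟨(r3 i j k h1 h2).2.2.1, (r3 i j k h1 h2).2.2.2.1⟩)
      (fun i j h => ⟨(r2 i j h).2.2.2.2.1, (r2 i j h).2.2.2.2.2.2.1⟩)
  exact exists_retract m g hq ha hb
    (by intro i j; rcases lt_trichotomy i j with h1 | rfl | h1 <;> grind)
    (by intro i j; rcases lt_trichotomy i j with h1 | rfl | h1 <;> grind)
    (by intro i j; rcases lt_trichotomy i j with h1 | rfl | h1 <;> grind)
    (fun i => (r1 i).2.2.2.1) (fun i => (r1 i).2.2.2.2.2.2) r0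
    (fun i => (r1 i).2.2.2.2.1) (fun i => (r1 i).2.2.2.2.2.1) hm

open DoAux in
theorem DoAux.ker_le_span (K : Type*) [Field K] (m : ℕ) (hm : 2 ≤ m) :
    RingHom.ker (piDo K m) ≤ Ideal.span (GDo K m) := by
  set I := Ideal.span (GDo K m) with hI
  let g : DoVar m → MvPolynomial (DoVar m) K ⧸ I := fun v => Ideal.Quotient.mk I (X v)
  have rel : ∀ a b : MvPolynomial (DoVar m) K, a - b ∈ GDo K m →
      Ideal.Quotient.mk I a = Ideal.Quotient.mk I b := fun a b h =>
    Ideal.Quotient.eq.2 (Ideal.subset_span h)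
  have r4 : ∀ i j k l, i < j → j < k → k < l →
      qf g i k * qf g j l = qf g i j * qf g k l ∧ qf g i l * qf g j k = qf g i j * qf g k l := by
    intro i j k l h1 h2 h3
    rw [qf_lt g h1, qf_lt g h2, qf_lt g h3, qf_lt g (h1.trans h2), qf_lt g (h2.trans h3),
      qf_lt g (h1.trans (h2.trans h3))]
    simp only [g, ← map_mul]
    exact ⟨rel _ _ (Or.inl ⟨i, j, k, l, h1, h2, h3, Or.inl rfl⟩),
      rel _ _ (Or.inl ⟨i, j, k, l, h1, h2, h3, Or.inr rfl⟩)⟩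
  have r3 : ∀ i j k, i < j → j < k →
      qf g j k * g (.xK1 i) = qf g i j * g (.xK1 k) ∧
      qf g i k * g (.xK1 j) = qf g i j * g (.xK1 k) ∧
      qf g j k * g (.xKn i) = qf g i j * g (.xKn k) ∧
      qf g i k * g (.xKn j) = qf g i j * g (.xKn k) ∧
      qf g j j * qf g i k = qf g i j * qf g j k ∧
      qf g i j * qf g i k = qf g i i * qf g j k ∧
      qf g k k * qf g i j = qf g i k * qf g j k := by
    intro i j k h1 h2
    rw [qf_lt g h1, qf_lt g h2, qf_lt g (h1.trans h2), qf_self, qf_self, qf_self]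
    simp only [g, ← map_mul]
    refine ⟨?_, ?_, ?_, ?_, ?_, ?_, ?_⟩ <;>
      refine rel _ _ (Or.inr (Or.inl ⟨i, j, k, h1, h2, ?_⟩)) <;> simp only [true_or, or_true]
  have r2 : ∀ i j, i < j →
      qf g i i * qf g j j = qf g i j ^ 2 ∧
      qf g i j * g .x1 = g (.xK1 i) * g (.xK1 j) ∧
      qf g i j * g .xn = g (.xKn i) * g (.xKn j) ∧
      qf g i j * g (.xK1 i) = qf g i i * g (.xK1 j) ∧
      qf g i j * g (.xKn i) = qf g i i * g (.xKn j) ∧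
      qf g j j * g (.xK1 i) = qf g i j * g (.xK1 j) ∧
      qf g j j * g (.xKn i) = qf g i j * g (.xKn j) ∧
      g (.xK1 j) * g (.xKn i) = g (.xK1 i) * g (.xKn j) ∧
      g (.xK1 i) * g (.xKn j) = g .x1n ^ 2 * qf g i j := by
    intro i j h1
    rw [qf_lt g h1, qf_self, qf_self]
    simp only [g, ← map_mul, ← map_pow]
    refine ⟨?_, ?_, ?_, ?_, ?_, ?_, ?_, ?_, ?_⟩ <;>
      refine rel _ _ (Or.inr (Or.inr (Or.inl ⟨i, j, h1, ?_⟩))) <;> simp only [true_or, or_true]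
  have r1 : ∀ i,
      qf g i i * g .x1 = g (.xK1 i) ^ 2 ∧
      qf g i i * g .xn = g (.xKn i) ^ 2 ∧
      g (.xK1 i) * g (.xKn i) = g .x1n ^ 2 * qf g i i ∧
      g (.xKn i) * g .x1 = g .x1n ^ 2 * g (.xK1 i) ∧
      g (.yK1 i) = g .x1n * g (.xK1 i) ∧
      g (.yKn i) = g .x1n * g (.xKn i) ∧
      g (.xK1 i) * g .xn = g .x1n ^ 2 * g (.xKn i) := by
    intro i
    rw [qf_self]
    simp only [g, ← map_mul, ← map_pow]
    refine ⟨?_, ?_, ?_, ?_, ?_, ?_, ?_⟩ <;>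
      refine rel _ _ (Or.inr (Or.inr (Or.inr (Or.inl ⟨i, ?_⟩)))) <;> simp only [true_or, or_true]
  have r0 : g .x1 * g .xn = g .x1n ^ 4 := by
    simp only [g, ← map_mul, ← map_pow]
    exact rel _ _ (Or.inr (Or.inr (Or.inr (Or.inr rfl))))
  obtain ⟨N, h0, hN⟩ := exists_retract_rel m g r4 r3 r2 r1 r0 hm
  exact ker_le K m I N h0 hN

open DoAux in
theorem DoAux.span_le_ker (K : Type*) [Field K] (m : ℕ) :
    Ideal.span (GDo K m) ≤ RingHom.ker (piDo K m) := by
  rw [Ideal.span_le]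
  rintro f hf
  rw [SetLike.mem_coe, RingHom.mem_ker]
  rcases hf with ⟨i, j, k, l, _, _, _, h⟩ | ⟨i, j, k, _, _, h⟩ | ⟨i, j, _, h⟩ | ⟨i, h⟩ | h
  · rcases h with rfl | rfl <;> simp only [piDo, map_sub, map_mul, map_pow, aeval_X, doImage] <;> ring
  · rcases h with rfl | rfl | rfl | rfl | rfl | rfl | rfl <;>
      simp only [piDo, map_sub, map_mul, map_pow, aeval_X, doImage] <;> ring
  · rcases h with rfl | rfl | rfl | rfl | rfl | rfl | rfl | rfl | rfl <;>
      simp only [piDo, map_sub, map_mul, map_pow, aeval_X, doImage] <;> ring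
  · rcases h with rfl | rfl | rfl | rfl | rfl | rfl | rfl <;>
      simp only [piDo, map_sub, map_mul, map_pow, aeval_X, doImage] <;> ring
  · subst h
    simp only [piDo, map_sub, map_mul, map_pow, aeval_X, doImage]; ring

/-- the ideal of `R` generated by `𝒢_{D_{2m+1}}` equals the toric ideal
`I_{D_{2m+1}} = ker π`. -/
theorem GDo_span_eq_ker (K : Type*) [Field K] (m : ℕ) (hm : 2 ≤ m) :
    Ideal.span (GDo K m) = RingHom.ker (piDo K m) := by
  exact le_antisymm (DoAux.span_le_ker K m) (DoAux.ker_le_span K m hm)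
end

section
/- The set 𝒢_{D_{2m+1}} is a minimal generating set of the toric ideal I_{D_{2m+1}}: the ideal generated by 𝒢_{D_{2m+1}} equals I_{D_{2m+1}}, and no proper subset of 𝒢_{D_{2m+1}} generates I_{D_{2m+1}}. -/
open MvPolynomial

namespace DoProof

/-- Generators as pairs (lead monomial, other monomial); the flag records the sign. -/
inductive Gen (m : ℕ) : Bool → Multiset (DoVar m) → Multiset (DoVar m) → Prop where
  | pp1 (i j k l : Fin m) (hij : i < j) (hjk : j < k) (hkl : k < l) :
      Gen m false {.xP i k (hij.trans hjk), .xP j l (hjk.trans hkl)} {.xP i j hij, .xP k l hkl}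
  | pp2 (i j k l : Fin m) (hij : i < j) (hjk : j < k) (hkl : k < l) :
      Gen m false {.xP i l (hij.trans (hjk.trans hkl)), .xP j k hjk} {.xP i j hij, .xP k l hkl}
  | pk1 (i j k : Fin m) (hij : i < j) (hjk : j < k) :
      Gen m false {.xP j k hjk, .xK1 i} {.xP i j hij, .xK1 k}
  | pk2 (i j k : Fin m) (hij : i < j) (hjk : j < k) :
      Gen m false {.xP i k (hij.trans hjk), .xK1 j} {.xP i j hij, .xK1 k}
  | pn1 (i j k : Fin m) (hij : i < j) (hjk : j < k) :
      Gen m false {.xP j k hjk, .xKn i} {.xP i j hij, .xKn k}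
  | pn2 (i j k : Fin m) (hij : i < j) (hjk : j < k) :
      Gen m false {.xP i k (hij.trans hjk), .xKn j} {.xP i j hij, .xKn k}
  | jp1 (i j k : Fin m) (hij : i < j) (hjk : j < k) :
      Gen m false {.xJ j, .xP i k (hij.trans hjk)} {.xP i j hij, .xP j k hjk}
  | jp2 (i j k : Fin m) (hij : i < j) (hjk : j < k) :
      Gen m false {.xP i j hij, .xP i k (hij.trans hjk)} {.xJ i, .xP j k hjk}
  | jp3 (i j k : Fin m) (hij : i < j) (hjk : j < k) :
      Gen m false {.xJ k, .xP i j hij} {.xP i k (hij.trans hjk), .xP j k hjk}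
  | jj (i j : Fin m) (hij : i < j) : Gen m false {.xJ i, .xJ j} {.xP i j hij, .xP i j hij}
  | p1 (i j : Fin m) (hij : i < j) : Gen m false {.xP i j hij, .x1} {.xK1 i, .xK1 j}
  | pn (i j : Fin m) (hij : i < j) : Gen m false {.xP i j hij, .xn} {.xKn i, .xKn j}
  | q1 (i j : Fin m) (hij : i < j) : Gen m false {.xP i j hij, .xK1 i} {.xJ i, .xK1 j}
  | qn (i j : Fin m) (hij : i < j) : Gen m false {.xP i j hij, .xKn i} {.xJ i, .xKn j}
  | r1 (i j : Fin m) (hij : i < j) : Gen m false {.xJ j, .xK1 i} {.xP i j hij, .xK1 j}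
  | rn (i j : Fin m) (hij : i < j) : Gen m false {.xJ j, .xKn i} {.xP i j hij, .xKn j}
  | kk (i j : Fin m) (hij : i < j) : Gen m false {.xK1 j, .xKn i} {.xK1 i, .xKn j}
  | cc (i j : Fin m) (hij : i < j) :
      Gen m true {.x1n, .x1n, .xP i j hij} {.xK1 i, .xKn j}
  | j1 (i : Fin m) : Gen m false {.xJ i, .x1} {.xK1 i, .xK1 i}
  | jn (i : Fin m) : Gen m false {.xJ i, .xn} {.xKn i, .xKn i}
  | k1n (i : Fin m) : Gen m false {.xK1 i, .xKn i} {.x1n, .x1n, .xJ i}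
  | n1 (i : Fin m) : Gen m false {.xKn i, .x1} {.x1n, .x1n, .xK1 i}
  | y1 (i : Fin m) : Gen m false {.yK1 i} {.x1n, .xK1 i}
  | yn (i : Fin m) : Gen m false {.yKn i} {.x1n, .xKn i}
  | k1 (i : Fin m) : Gen m false {.xK1 i, .xn} {.x1n, .x1n, .xKn i}
  | top : Gen m false {.x1, .xn} {.x1n, .x1n, .x1n, .x1n}

variable {K : Type*} [Field K] {m : ℕ}

noncomputable def mon (K : Type*) [Field K] {m : ℕ} (M : Multiset (DoVar m)) :
    MvPolynomial (DoVar m) K := (M.map X).prod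

noncomputable def poly (K : Type*) [Field K] {m : ℕ} (s : Bool) (a b : Multiset (DoVar m)) :
    MvPolynomial (DoVar m) K := if s then mon K b - mon K a else mon K a - mon K b

lemma exists_gen {g : MvPolynomial (DoVar m) K} (hg : g ∈ GDo K m) :
    ∃ s a b, Gen m s a b ∧ g = poly K s a b := by
  simp only [GDo, Set.mem_ofPred_eq] at hg
  rcases hg with ⟨i, j, k, l, hij, hjk, hkl, h⟩ | ⟨i, j, k, hij, hjk, h⟩ | ⟨i, j, hij, h⟩ | ⟨i, h⟩ | h
  · rcases h with h | h
    · exact ⟨_, _, _, .pp1 i j k l hij hjk hkl, by simp [h, poly, mon]⟩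
    · exact ⟨_, _, _, .pp2 i j k l hij hjk hkl, by simp [h, poly, mon]⟩
  · rcases h with h | h | h | h | h | h | h
    · exact ⟨_, _, _, .pk1 i j k hij hjk, by simp [h, poly, mon]⟩
    · exact ⟨_, _, _, .pk2 i j k hij hjk, by simp [h, poly, mon]⟩
    · exact ⟨_, _, _, .pn1 i j k hij hjk, by simp [h, poly, mon]⟩
    · exact ⟨_, _, _, .pn2 i j k hij hjk, by simp [h, poly, mon]⟩
    · exact ⟨_, _, _, .jp1 i j k hij hjk, by simp [h, poly, mon]⟩
    · exact ⟨_, _, _, .jp2 i j k hij hjk, by simp [h, poly, mon]⟩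
    · exact ⟨_, _, _, .jp3 i j k hij hjk, by simp [h, poly, mon]⟩
  · rcases h with h | h | h | h | h | h | h | h | h
    · exact ⟨_, _, _, .jj i j hij, by simp [h, poly, mon, pow_two]⟩
    · exact ⟨_, _, _, .p1 i j hij, by simp [h, poly, mon]⟩
    · exact ⟨_, _, _, .pn i j hij, by simp [h, poly, mon]⟩
    · exact ⟨_, _, _, .q1 i j hij, by simp [h, poly, mon]⟩
    · exact ⟨_, _, _, .qn i j hij, by simp [h, poly, mon]⟩
    · exact ⟨_, _, _, .r1 i j hij, by simp [h, poly, mon]⟩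
    · exact ⟨_, _, _, .rn i j hij, by simp [h, poly, mon]⟩
    · exact ⟨_, _, _, .kk i j hij, by simp [h, poly, mon]⟩
    · exact ⟨_, _, _, .cc i j hij, by simp [h, poly, mon, pow_two, mul_assoc]⟩
  · rcases h with h | h | h | h | h | h | h
    · exact ⟨_, _, _, .j1 i, by simp [h, poly, mon, pow_two]⟩
    · exact ⟨_, _, _, .jn i, by simp [h, poly, mon, pow_two]⟩
    · exact ⟨_, _, _, .k1n i, by simp [h, poly, mon, pow_two, mul_assoc]⟩
    · exact ⟨_, _, _, .n1 i, by simp [h, poly, mon, pow_two, mul_assoc]⟩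
    · exact ⟨_, _, _, .y1 i, by simp [h, poly, mon]⟩
    · exact ⟨_, _, _, .yn i, by simp [h, poly, mon]⟩
    · exact ⟨_, _, _, .k1 i, by simp [h, poly, mon, pow_two, mul_assoc]⟩
  · exact ⟨_, _, _, .top, by simp [h, poly, mon]; ring⟩

lemma poly_mem {s a b} (h : Gen m s a b) : poly K s a b ∈ GDo K m := by
  simp only [GDo, Set.mem_ofPred_eq]
  cases h with
  | pp1 i j k l hij hjk hkl =>
    exact Or.inl ⟨i, j, k, l, hij, hjk, hkl, by simp [poly, mon]⟩
  | pp2 i j k l hij hjk hkl =>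
    exact Or.inl ⟨i, j, k, l, hij, hjk, hkl, by simp [poly, mon]⟩
  | pk1 i j k hij hjk => exact Or.inr (Or.inl ⟨i, j, k, hij, hjk, by simp [poly, mon]⟩)
  | pk2 i j k hij hjk => exact Or.inr (Or.inl ⟨i, j, k, hij, hjk, by simp [poly, mon]⟩)
  | pn1 i j k hij hjk => exact Or.inr (Or.inl ⟨i, j, k, hij, hjk, by simp [poly, mon]⟩)
  | pn2 i j k hij hjk => exact Or.inr (Or.inl ⟨i, j, k, hij, hjk, by simp [poly, mon]⟩)
  | jp1 i j k hij hjk => exact Or.inr (Or.inl ⟨i, j, k, hij, hjk, by simp [poly, mon]⟩)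
  | jp2 i j k hij hjk => exact Or.inr (Or.inl ⟨i, j, k, hij, hjk, by simp [poly, mon]⟩)
  | jp3 i j k hij hjk => exact Or.inr (Or.inl ⟨i, j, k, hij, hjk, by simp [poly, mon]⟩)
  | jj i j hij => exact Or.inr (Or.inr (Or.inl ⟨i, j, hij, by simp [poly, mon, pow_two]⟩))
  | p1 i j hij => exact Or.inr (Or.inr (Or.inl ⟨i, j, hij, by simp [poly, mon]⟩))
  | pn i j hij => exact Or.inr (Or.inr (Or.inl ⟨i, j, hij, by simp [poly, mon]⟩))
  | q1 i j hij => exact Or.inr (Or.inr (Or.inl ⟨i, j, hij, by simp [poly, mon]⟩))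
  | qn i j hij => exact Or.inr (Or.inr (Or.inl ⟨i, j, hij, by simp [poly, mon]⟩))
  | r1 i j hij => exact Or.inr (Or.inr (Or.inl ⟨i, j, hij, by simp [poly, mon]⟩))
  | rn i j hij => exact Or.inr (Or.inr (Or.inl ⟨i, j, hij, by simp [poly, mon]⟩))
  | kk i j hij => exact Or.inr (Or.inr (Or.inl ⟨i, j, hij, by simp [poly, mon]⟩))
  | cc i j hij =>
    exact Or.inr (Or.inr (Or.inl ⟨i, j, hij, by simp [poly, mon, pow_two, mul_assoc]⟩))
  | j1 i => exact Or.inr (Or.inr (Or.inr (Or.inl ⟨i, by simp [poly, mon, pow_two]⟩)))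
  | jn i => exact Or.inr (Or.inr (Or.inr (Or.inl ⟨i, by simp [poly, mon, pow_two]⟩)))
  | k1n i =>
    exact Or.inr (Or.inr (Or.inr (Or.inl ⟨i, by simp [poly, mon, pow_two, mul_assoc]⟩)))
  | n1 i =>
    exact Or.inr (Or.inr (Or.inr (Or.inl ⟨i, by simp [poly, mon, pow_two, mul_assoc]⟩)))
  | y1 i => exact Or.inr (Or.inr (Or.inr (Or.inl ⟨i, by simp [poly, mon]⟩)))
  | yn i => exact Or.inr (Or.inr (Or.inr (Or.inl ⟨i, by simp [poly, mon]⟩)))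
  | k1 i =>
    exact Or.inr (Or.inr (Or.inr (Or.inl ⟨i, by simp [poly, mon, pow_two, mul_assoc]⟩)))
  | top =>
    refine Or.inr (Or.inr (Or.inr (Or.inr ?_)))
    simp [poly, mon]; ring

lemma gen_pi {s a b} (h : Gen m s a b) : piDo K m (poly K s a b) = 0 := by
  cases h <;> simp [poly, mon, piDo, doImage] <;> ring

/-! ### Minimality -/

lemma mon_eq [DecidableEq (DoVar m)] (M : Multiset (DoVar m)) :
    mon K M = monomial (Multiset.toFinsupp M) 1 := by
  induction M using Multiset.induction with
  | empty => simp [mon]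
  | cons a s ih =>
    have : mon K (a ::ₘ s) = X a * mon K s := by simp [mon]
    rw [this, ih, X, monomial_mul, ← Multiset.singleton_add, map_add]
    simp

lemma coeff_span {σ : Type*} (a : σ →₀ ℕ) (S : Set (MvPolynomial σ K))
    (hS : ∀ h ∈ S, ∀ b ≤ a, coeff b h = 0) {f : MvPolynomial σ K} (hf : f ∈ Ideal.span S) :
    ∀ b ≤ a, coeff b f = 0 := by
  classical
  induction hf using Submodule.span_induction with
  | mem x h => exact hS x h
  | zero => simp
  | add x y _ _ hx hy => intro b hb; simp [hx b hb, hy b hb]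
  | smul r x _ hx =>
    intro b hb
    rw [smul_eq_mul, coeff_mul]
    refine Finset.sum_eq_zero fun p hp => ?_
    rw [Finset.HasAntidiagonal.mem_antidiagonal] at hp
    rw [hx p.2 (le_trans (by rw [← hp]; exact le_add_self) hb), mul_zero]

lemma sq_lead {s a b} (h : Gen m s a b) (v : DoVar m) (hv : {v, v} ≤ a) : v = .x1n := by
  have key : ∀ a : Multiset (DoVar m), a.Nodup → {v, v} ≤ a → v = .x1n := by
    intro a ha hv
    have := Multiset.nodup_of_le hv ha
    simp at this
  cases h
  case cc i j hij =>
    by_contra hne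
    rw [Multiset.insert_eq_cons, Multiset.insert_eq_cons,
      Multiset.insert_eq_cons, Multiset.le_cons_of_notMem (by simpa using Ne.symm hne),
       Multiset.le_cons_of_notMem (by simpa using Ne.symm hne)] at hv
    simpa using Multiset.card_le_card hv
  all_goals
    refine key _ ?_ hv
    simp
  all_goals intros; omega

set_option linter.unusedSimpArgs false in
set_option maxHeartbeats 4000000 in
lemma lead_lead {s a b s' a' b'} (h : Gen m s a b) (h' : Gen m s' a' b')
    (hm : ∀ x ∈ a', x ∈ a) : s = s' ∧ a = a' ∧ b = b' := by
  cases h <;> cases h' <;>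
    simp only [Multiset.insert_eq_cons, Multiset.mem_cons, Multiset.mem_singleton,
      forall_eq_or_imp, forall_eq, reduceCtorEq, or_false, false_or, and_false, false_and,
      or_self, and_self, DoVar.xP.injEq, DoVar.xJ.injEq, DoVar.xK1.injEq, DoVar.xKn.injEq,
      DoVar.yK1.injEq, DoVar.yKn.injEq, true_and, and_true, true_or, or_true] at hm <;>
    first
    | (exfalso; omega)
    | ((try casesm* _ ∧ _, _ ∨ _) <;>
        first
        | (exfalso; omega)
        | (subst_vars; exact ⟨rfl, rfl, rfl⟩))

set_option linter.unusedSimpArgs false in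
set_option maxHeartbeats 4000000 in
lemma tail_lead {s a b s' a' b'} (h : Gen m s a b) (h' : Gen m s' a' b')
    (hle : b' ≤ a) : False := by
  have hm : ∀ x ∈ b', x ∈ a := fun x hx => Multiset.mem_of_le hle hx
  have hsq := sq_lead h
  have hc := Multiset.card_le_card hle
  cases h'
  case jj => simpa using hsq _ hle
  case j1 => simpa using hsq _ hle
  case jn => simpa using hsq _ hle
  case top => cases h <;> simp at hm hc
  all_goals
  clear hsq hc hle
  cases h <;>
    simp only [Multiset.insert_eq_cons, Multiset.mem_cons, Multiset.mem_singleton,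
      forall_eq_or_imp, forall_eq, reduceCtorEq, or_false, false_or, and_false, false_and,
      or_self, and_self, DoVar.xP.injEq, DoVar.xJ.injEq, DoVar.xK1.injEq, DoVar.xKn.injEq,
      DoVar.yK1.injEq, DoVar.yKn.injEq, true_and, and_true, true_or, or_true] at hm <;>
    omega

lemma toFinsupp_le {σ : Type*} [DecidableEq σ] {a b : Multiset σ}
    (h : Multiset.toFinsupp a ≤ Multiset.toFinsupp b) : a ≤ b := by
  rw [Multiset.le_iff_count]
  intro x
  simpa using h x

lemma minimal {g : MvPolynomial (DoVar m) K} (hg : g ∈ GDo K m) :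
    g ∉ Ideal.span (GDo K m \ {g}) := by
  classical
  intro hmem
  obtain ⟨s, a, b, h, rfl⟩ := exists_gen hg
  have := coeff_span (Multiset.toFinsupp a) _ ?_ hmem _ le_rfl
  · have hne : Multiset.toFinsupp b ≠ Multiset.toFinsupp a := fun hh =>
      tail_lead h h (Multiset.toFinsupp.injective hh).le
    cases s <;> simp [poly, mon_eq, coeff_monomial, hne] at this
  · rintro f ⟨hf, hfg⟩ c hc
    obtain ⟨s', a', b', h', rfl⟩ := exists_gen hf
    have h1 : Multiset.toFinsupp a' ≠ c := by
      rintro rfl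
      have hle : a' ≤ a := toFinsupp_le hc
      obtain ⟨rfl, rfl, rfl⟩ := lead_lead h h' (fun x hx => Multiset.mem_of_le hle hx)
      exact hfg rfl
    have h2 : Multiset.toFinsupp b' ≠ c := by
      rintro rfl
      have hle : b' ≤ a := toFinsupp_le hc
      exact tail_lead h h' hle
    cases s' <;> simp [poly, mon_eq, coeff_monomial, h1, h2]

/-! ### Generation -/

section Pair
variable {V Q : Type*} [CommRing Q]

def pairProd (z : V → V → Q) : List V → Q
  | [] => 1
  | [_] => 0
  | x :: y :: l => z x y * pairProd z l

lemma pairProd_perm (z : V → V → Q) (hs : ∀ p q, z p q = z q p)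
    (hr : ∀ p q r s, z p q * z r s = z p r * z q s) {l l' : List V} (h : l.Perm l') :
    pairProd z l = pairProd z l' ∧ ∀ x, pairProd z (x :: l) = pairProd z (x :: l') := by
  induction h with
  | nil => simp
  | cons x _ ih => exact ⟨ih.2 x, fun w => by simp [pairProd, ih.1]⟩
  | swap x y l =>
    refine ⟨by simp [pairProd, hs x y], fun w => ?_⟩
    cases l with
    | nil => simp [pairProd]
    | cons v l =>
      simp only [pairProd]
      rw [← mul_assoc, ← mul_assoc, hr w y x v]
  | trans _ _ ih1 ih2 => exact ⟨ih1.1.trans ih2.1, fun x => (ih1.2 x).trans (ih2.2 x)⟩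

/-- A four-point symmetric relation holds if it holds for sorted tuples. -/
lemma four_sorted (z : V → V → Q) (hs : ∀ p q, z p q = z q p) (key : V → ℕ)
    (h : ∀ p q r s, key p ≤ key q → key q ≤ key r → key r ≤ key s →
      z p r * z q s = z p q * z r s ∧ z p s * z q r = z p q * z r s) (p q r s : V) :
    z p q * z r s = z p r * z q s := by
  let P : V → V → V → V → Prop := fun p q r s =>
    z p r * z q s = z p q * z r s ∧ z p s * z q r = z p q * z r s
  have s12 : ∀ p q r s, P p q r s → P q p r s := by
    rintro p q r s ⟨h1, h2⟩
    refine ⟨?_, ?_⟩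
    · rw [hs q p, ← h2]; ring
    · rw [hs q p, ← h1]; ring
  have s23 : ∀ p q r s, P p q r s → P p r q s := by
    rintro p q r s ⟨h1, h2⟩
    refine ⟨h1.symm, ?_⟩
    rw [hs r q, h2, h1]
  have s34 : ∀ p q r s, P p q r s → P p q s r := by
    rintro p q r s ⟨h1, h2⟩
    refine ⟨?_, ?_⟩
    · rw [hs s r, h2]
    · rw [hs s r, h1]
  have t1 : ∀ p q r s, key q ≤ key r → key r ≤ key s → P p q r s := by
    intro p q r s h1 h2
    rcases le_total (key p) (key q) with h3 | h3
    · exact h _ _ _ _ h3 h1 h2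
    refine s12 _ _ _ _ ?_
    rcases le_total (key p) (key r) with h4 | h4
    · exact h _ _ _ _ h3 h4 h2
    refine s23 _ _ _ _ ?_
    rcases le_total (key p) (key s) with h5 | h5
    · exact h _ _ _ _ h1 h4 h5
    exact s34 _ _ _ _ (h _ _ _ _ h1 h2 h5)
  have t2 : ∀ p q r s, key r ≤ key s → P p q r s := by
    intro p q r s h1
    rcases le_total (key q) (key r) with h3 | h3
    · exact t1 _ _ _ _ h3 h1
    refine s23 _ _ _ _ ?_
    rcases le_total (key q) (key s) with h4 | h4
    · exact t1 _ _ _ _ h3 h4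
    exact s34 _ _ _ _ (t1 _ _ _ _ h1 h4)
  have t3 : P p q r s := by
    rcases le_total (key r) (key s) with h3 | h3
    · exact t2 _ _ _ _ h3
    exact s34 _ _ _ _ (t2 _ _ _ _ h3)
  exact t3.1.symm

end Pair

/-- Letters: `J`, `u_1²`, `u_n²`. -/
inductive Let (m : ℕ) : Type where
  | j : Fin m → Let m
  | A : Let m
  | B : Let m

def key : Let m → ℕ
  | .j t => t.val
  | .A => m
  | .B => m + 1

abbrev Quo (K : Type*) [Field K] (m : ℕ) := MvPolynomial (DoVar m) K ⧸ Ideal.span (GDo K m)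

noncomputable def xq (K : Type*) [Field K] {m : ℕ} (v : DoVar m) : Quo K m :=
  Ideal.Quotient.mk _ (X v)

lemma rel {s a b} (h : Gen m s a b) : (a.map (xq K)).prod = (b.map (xq K)).prod := by
  have hh : ∀ M : Multiset (DoVar m), (M.map (xq K)).prod =
      Ideal.Quotient.mk (Ideal.span (GDo K m)) (mon K M) := by
    intro M
    rw [mon, map_multiset_prod, Multiset.map_map]
    rfl
  have hp : Ideal.Quotient.mk (Ideal.span (GDo K m)) (poly K s a b) = 0 :=
    Ideal.Quotient.eq_zero_iff_mem.mpr (Ideal.subset_span (poly_mem h))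
  rw [hh, hh]
  cases s
  · simpa [poly, sub_eq_zero] using hp
  · symm; simpa [poly, sub_eq_zero] using hp

noncomputable def zq (K : Type*) [Field K] {m : ℕ} : Let m → Let m → Quo K m
  | .j s, .j t => if h : s < t then xq K (.xP s t h) else
      if h : t < s then xq K (.xP t s h) else xq K (.xJ s)
  | .j s, .A => xq K (.xK1 s)
  | .A, .j s => xq K (.xK1 s)
  | .j s, .B => xq K (.xKn s)
  | .B, .j s => xq K (.xKn s)
  | .A, .A => xq K .x1
  | .B, .B => xq K .xn
  | .A, .B => xq K .x1n ^ 2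
  | .B, .A => xq K .x1n ^ 2

lemma zq_symm (p q : Let m) : zq K p q = zq K q p := by
  rcases p with s | _ | _ <;> rcases q with t | _ | _ <;> try rfl
  simp only [zq]
  rcases lt_trichotomy s t with h | h | h
  · simp [h, h.not_gt]
  · subst h; rfl
  · simp [h, h.not_gt]

lemma zq_lt {s t : Fin m} (h : s < t) : zq K (.j s) (.j t) = xq K (.xP s t h) := by
  simp [zq, h]

lemma zq_self (s : Fin m) : zq K (.j s) (.j s) = xq K (.xJ s) := by
  simp [zq]

lemma zq_sorted (p q r s : Let m) (h1 : key p ≤ key q) (h2 : key q ≤ key r)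
    (h3 : key r ≤ key s) :
    zq K p r * zq K q s = zq K p q * zq K r s ∧ zq K p s * zq K q r = zq K p q * zq K r s := by
  rcases p with i | _ | _
  · rcases q with j | _ | _
    · have hij : i < j ∨ i = j := lt_or_eq_of_le (by simpa [key] using h1)
      rcases r with k | _ | _
      · have hjk : j < k ∨ j = k := lt_or_eq_of_le (by simpa [key] using h2)
        rcases s with l | _ | _
        · have hkl : k < l ∨ k = l := lt_or_eq_of_le (by simpa [key] using h3)
          rcases hij with hij | rfl <;> rcases hjk with hjk | rfl <;> rcases hkl with hkl | rfl
          · have e1 := rel (K := K) (Gen.pp1 i j k l hij hjk hkl)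
            have e2 := rel (K := K) (Gen.pp2 i j k l hij hjk hkl)
            simp at e1 e2
            simp [zq_lt, hij, hjk, hkl, hij.trans hjk, hjk.trans hkl, (hij.trans hjk).trans hkl,
              e1, e2]
          · have e1 := rel (K := K) (Gen.jp3 i j k hij hjk)
            simp at e1
            rw [zq_lt hij, zq_lt hjk, zq_lt (hij.trans hjk), zq_self]
            constructor <;> linear_combination -e1
          · have e1 := rel (K := K) (Gen.jp1 i j l hij hkl)
            simp at e1
            rw [zq_lt hij, zq_lt hkl, zq_lt (hij.trans hkl), zq_self]
            exact ⟨rfl, by linear_combination e1⟩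
          · simp
          · have e1 := rel (K := K) (Gen.jp2 i k l hjk hkl)
            simp at e1
            rw [zq_lt hjk, zq_lt hkl, zq_lt (hjk.trans hkl), zq_self]
            constructor <;> linear_combination e1
          · have e1 := rel (K := K) (Gen.jj i k hjk)
            simp at e1
            rw [zq_lt hjk, zq_self, zq_self]
            constructor <;> linear_combination -e1
          · simp [mul_comm]
          · simp
        · rcases hij with hij | rfl <;> rcases hjk with hjk | rfl
          · have e1 := rel (K := K) (Gen.pk1 i j k hij hjk)
            have e2 := rel (K := K) (Gen.pk2 i j k hij hjk)
            simp at e1 e2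
            rw [zq_lt hij, zq_lt hjk, zq_lt (hij.trans hjk)]
            simp only [zq]
            constructor
            · linear_combination e2
            · linear_combination e1
          · have e1 := rel (K := K) (Gen.r1 i j hij)
            simp at e1
            rw [zq_lt hij, zq_self]
            simp only [zq, true_and]
            linear_combination e1
          · have e1 := rel (K := K) (Gen.q1 i k hjk)
            simp at e1
            rw [zq_lt hjk, zq_self]
            simp only [zq]
            constructor <;> linear_combination e1
          · simp [mul_comm]
        · rcases hij with hij | rfl <;> rcases hjk with hjk | rfl
          · have e1 := rel (K := K) (Gen.pn1 i j k hij hjk)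
            have e2 := rel (K := K) (Gen.pn2 i j k hij hjk)
            simp at e1 e2
            rw [zq_lt hij, zq_lt hjk, zq_lt (hij.trans hjk)]
            simp only [zq]
            constructor
            · linear_combination e2
            · linear_combination e1
          · have e1 := rel (K := K) (Gen.rn i j hij)
            simp at e1
            rw [zq_lt hij, zq_self]
            simp only [zq, true_and]
            linear_combination e1
          · have e1 := rel (K := K) (Gen.qn i k hjk)
            simp at e1
            rw [zq_lt hjk, zq_self]
            simp only [zq]
            constructor <;> linear_combination e1
          · simp [mul_comm]
      · rcases s with l | _ | _
        · simp [key] at h3; omega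
        · rcases hij with hij | rfl
          · have e1 := rel (K := K) (Gen.p1 i j hij)
            simp at e1
            rw [zq_lt hij]
            simp only [zq]
            constructor <;> linear_combination -e1
          · have e1 := rel (K := K) (Gen.j1 i)
            simp at e1
            rw [zq_self]
            simp only [zq]
            constructor <;> linear_combination -e1
        · rcases hij with hij | rfl
          · have e1 := rel (K := K) (Gen.kk i j hij)
            have e2 := rel (K := K) (Gen.cc i j hij)
            simp at e1 e2
            rw [zq_lt hij]
            simp only [zq]
            constructor
            · linear_combination -e2
            · linear_combination e1 - e2
          · have e1 := rel (K := K) (Gen.k1n i)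
            simp at e1
            rw [zq_self]
            simp only [zq]
            constructor <;> linear_combination e1
      · rcases s with l | _ | _
        · simp [key] at h3; omega
        · simp [key] at h3
        · rcases hij with hij | rfl
          · have e1 := rel (K := K) (Gen.pn i j hij)
            simp at e1
            rw [zq_lt hij]
            simp only [zq]
            constructor <;> linear_combination -e1
          · have e1 := rel (K := K) (Gen.jn i)
            simp at e1
            rw [zq_self]
            simp only [zq]
            constructor <;> linear_combination -e1
    · rcases r with k | _ | _
      · simp [key] at h2; omega
      · rcases s with l | _ | _
        · simp [key] at h3; omega
        · simp
        · have e1 := rel (K := K) (Gen.n1 i)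
          simp at e1
          simp only [zq, true_and]
          linear_combination e1
      · rcases s with l | _ | _
        · simp [key] at h3; omega
        · simp [key] at h3
        · have e1 := rel (K := K) (Gen.k1 i)
          simp at e1
          simp only [zq]
          constructor <;> linear_combination -e1
    · rcases r with k | _ | _
      · simp [key] at h2; omega
      · simp [key] at h2
      · rcases s with l | _ | _
        · simp [key] at h3; omega
        · simp [key] at h3
        · simp
  · rcases q with j | _ | _
    · simp [key] at h1; omega
    · rcases r with k | _ | _
      · simp [key] at h2; omega
      · rcases s with l | _ | _
        · simp [key] at h3; omega
        · simp
        · simp [mul_comm]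
      · rcases s with l | _ | _
        · simp [key] at h3; omega
        · simp [key] at h3
        · have e1 := rel (K := K) (Gen.top (m := m))
          simp at e1
          simp only [zq]
          constructor <;> linear_combination -e1
    · rcases r with k | _ | _
      · simp [key] at h2; omega
      · simp [key] at h2
      · rcases s with l | _ | _
        · simp [key] at h3; omega
        · simp [key] at h3
        · simp
  · rcases q with j | _ | _
    · simp [key] at h1; omega
    · simp [key] at h1
    · rcases r with k | _ | _
      · simp [key] at h2; omega
      · simp [key] at h2
      · rcases s with l | _ | _
        · simp [key] at h3; omega
        · simp [key] at h3
        · simp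

lemma zq_rel (p q r s : Let m) : zq K p q * zq K r s = zq K p r * zq K q s :=
  four_sorted (zq K) zq_symm key zq_sorted p q r s

/-- Normal form data: exponent of `x_{1,n}`, letters, and `J^c` letters. -/
abbrev Dat (m : ℕ) := ℕ × List (Let m) × List (Fin (m - 1))

def dat : DoVar m → Dat m
  | .x1 => (0, [.A, .A], [])
  | .xn => (0, [.B, .B], [])
  | .xJ t => (0, [.j t, .j t], [])
  | .xJc t => (0, [], [t])
  | .xP s t _ => (0, [.j s, .j t], [])
  | .x1n => (1, [], [])
  | .xK1 t => (0, [.j t, .A], [])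
  | .xKn t => (0, [.j t, .B], [])
  | .yK1 t => (1, [.j t, .A], [])
  | .yKn t => (1, [.j t, .B], [])

def dadd (d e : Dat m) : Dat m := (d.1 + e.1, d.2.1 ++ e.2.1, d.2.2 ++ e.2.2)

noncomputable def val (K : Type*) [Field K] {m : ℕ} (d : Dat m) : Quo K m :=
  xq K .x1n ^ d.1 * pairProd (zq K) d.2.1 * (d.2.2.map fun t => xq K (.xJc t)).prod

noncomputable def degL : Let m → (ℕ →₀ ℕ)
  | .j t => Finsupp.single (2 * t.val + 2) 1
  | .A => Finsupp.single 1 2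
  | .B => Finsupp.single (2 * m + 1) 2

noncomputable def deg (d : Dat m) : ℕ →₀ ℕ :=
  d.1 • (Finsupp.single 1 1 + Finsupp.single (2 * m + 1) 1) + (d.2.1.map degL).sum
    + (d.2.2.map fun t : Fin (m - 1) => Finsupp.single (2 * t.val + 3) 1).sum

lemma val_dadd (v : DoVar m) (d : Dat m) : val K (dadd (dat v) d) = xq K v * val K d := by
  cases v
  case xP s t h => simp [val, dadd, dat, pairProd, zq, h]; ring
  case yK1 i =>
    have := rel (K := K) (Gen.y1 i)
    simp at this
    simp [val, dadd, dat, pairProd, zq, this]; ring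
  case yKn i =>
    have := rel (K := K) (Gen.yn i)
    simp at this
    simp [val, dadd, dat, pairProd, zq, this]; ring
  all_goals simp [val, dadd, dat, pairProd, zq]
  all_goals ring

lemma deg_dadd (d e : Dat m) : deg (dadd d e) = deg d + deg e := by
  simp only [deg, dadd, List.map_append, List.sum_append, add_smul]
  abel

lemma pi_X (v : DoVar m) : piDo K m (X v) = monomial (deg (dat v)) 1 := by
  have hX : ∀ i : ℕ, (X i : MvPolynomial ℕ K) = monomial (Finsupp.single i 1) 1 := fun _ => rfl
  simp only [piDo, aeval_X]
  cases v <;> simp only [doImage, hX, monomial_pow, monomial_mul, deg, dat, one_pow, mul_one] <;>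
    refine congrArg (fun s => monomial s (1 : K)) ?_ <;> ext a <;>
    simp [degL, Finsupp.single_apply] <;> (try split_ifs) <;> omega

lemma monomial_dat (s : DoVar m →₀ ℕ) : ∃ d : Dat m,
    Ideal.Quotient.mk (Ideal.span (GDo K m)) (monomial s 1) = val K d ∧
      piDo K m (monomial s 1) = monomial (deg d) 1 := by
  classical
  obtain ⟨M, rfl⟩ := (Multiset.toFinsupp (α := DoVar m)).surjective s
  rw [← mon_eq]
  induction M using Multiset.induction with
  | empty => exact ⟨(0, [], []), by simp [mon, val, pairProd], by simp [mon, deg]⟩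
  | cons v M ih =>
    obtain ⟨d, h1, h2⟩ := ih
    have : mon K (v ::ₘ M) = X v * mon K M := by simp [mon]
    refine ⟨dadd (dat v) d, ?_, ?_⟩
    · rw [this, map_mul, h1, val_dadd, xq]
    · rw [this, map_mul, h2, pi_X, monomial_mul, deg_dadd, mul_one]

open Classical in
lemma deg_Jc (d : Dat m) (t : Fin (m - 1)) : deg d (2 * t.val + 3) = d.2.2.count t := by
  obtain ⟨k, M, E⟩ := d
  have hM : (M.map degL).sum (2 * t.val + 3) = 0 := by
    induction M with
    | nil => simp
    | cons x l ih =>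
      rw [List.map_cons, List.sum_cons, Finsupp.add_apply, ih]
      cases x <;> simp [degL, Finsupp.single_apply] <;> omega
  have hE : (E.map fun t : Fin (m - 1) => Finsupp.single (2 * t.val + 3) 1).sum (2 * t.val + 3)
      = E.count t := by
    clear hM
    induction E with
    | nil => simp
    | cons x l ih =>
      rw [List.map_cons, List.sum_cons, Finsupp.add_apply, ih, List.count_cons]
      simp [Finsupp.single_apply, Fin.ext_iff]; omega
  have h1 : ¬ (2 * m + 1 = 2 * t.val + 3) := by omega
  simp [deg, hM, hE, Finsupp.single_apply]
  omega

open Classical in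
lemma deg_J (d : Dat m) (t : Fin m) : deg d (2 * t.val + 2) = d.2.1.count (.j t) := by
  obtain ⟨k, M, E⟩ := d
  have hM : (M.map degL).sum (2 * t.val + 2) = M.count (.j t) := by
    induction M with
    | nil => simp
    | cons x l ih =>
      rw [List.map_cons, List.sum_cons, Finsupp.add_apply, ih, List.count_cons]
      cases x <;> simp [degL, Finsupp.single_apply, Fin.ext_iff] <;> omega
  have hE : (E.map fun t : Fin (m - 1) => Finsupp.single (2 * t.val + 3) 1).sum (2 * t.val + 2)
      = 0 := by
    clear hM
    induction E with
    | nil => simp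
    | cons x l ih =>
      rw [List.map_cons, List.sum_cons, Finsupp.add_apply, ih]
      simp [Finsupp.single_apply]; omega
  have h1 : ¬ (2 * m + 1 = 2 * t.val + 2) := by omega
  simp [deg, hM, hE, Finsupp.single_apply]
  omega

open Classical in
lemma deg_1 (hm : 2 ≤ m) (d : Dat m) : deg d 1 = d.1 + 2 * d.2.1.count .A := by
  obtain ⟨k, M, E⟩ := d
  have hM : (M.map degL).sum 1 = 2 * M.count .A := by
    induction M with
    | nil => simp
    | cons x l ih =>
      rw [List.map_cons, List.sum_cons, Finsupp.add_apply, ih, List.count_cons]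
      cases x <;> simp [degL, Finsupp.single_apply] <;> omega
  have hE : (E.map fun t : Fin (m - 1) => Finsupp.single (2 * t.val + 3) 1).sum 1
      = 0 := by
    clear hM
    induction E with
    | nil => simp
    | cons x l ih =>
      rw [List.map_cons, List.sum_cons, Finsupp.add_apply, ih]
      simp [Finsupp.single_apply]
  have h1 : ¬ (m = 0) := by omega
  simp [deg, hM, hE, Finsupp.single_apply, h1]

open Classical in
lemma deg_n (hm : 2 ≤ m) (d : Dat m) : deg d (2 * m + 1) = d.1 + 2 * d.2.1.count .B := by
  obtain ⟨k, M, E⟩ := d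
  have hM : (M.map degL).sum (2 * m + 1) = 2 * M.count .B := by
    induction M with
    | nil => simp
    | cons x l ih =>
      rw [List.map_cons, List.sum_cons, Finsupp.add_apply, ih, List.count_cons]
      cases x <;> simp [degL, Finsupp.single_apply] <;> omega
  have hE : (E.map fun t : Fin (m - 1) => Finsupp.single (2 * t.val + 3) 1).sum (2 * m + 1)
      = 0 := by
    clear hM
    induction E with
    | nil => simp
    | cons x l ih =>
      rw [List.map_cons, List.sum_cons, Finsupp.add_apply, ih]
      simp [Finsupp.single_apply]; omega
  have h1 : ¬ (m = 0) := by omega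
  simp [deg, hM, hE, Finsupp.single_apply, h1]

open Classical in
lemma expand (t : ℕ) (M : List (Let m)) : ∃ L : List (Let m),
    pairProd (zq K) L = xq K .x1n ^ (2 * t) * pairProd (zq K) M ∧
    (∀ i, L.count (.j i) = M.count (.j i)) ∧ L.count .A = M.count .A + t ∧
    L.count .B = M.count .B + t := by
  induction t with
  | zero => exact ⟨M, by simp⟩
  | succ t ih =>
    obtain ⟨L, h1, h2, h3, h4⟩ := ih
    refine ⟨.A :: .B :: L, ?_, ?_, ?_, ?_⟩
    · simp only [pairProd, h1, zq]; ring
    · intro i; simp [List.count_cons, h2]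
    · simp [List.count_cons, h3]; omega
    · simp [List.count_cons, h4]; omega

lemma val_eq_aux (hm : 2 ≤ m) (d e : Dat m) (h : deg d = deg e) (hle : d.1 ≤ e.1) :
    val K d = val K e := by
  classical
  have hJc := fun t : Fin (m - 1) => DFunLike.congr_fun h (2 * t.val + 3)
  have hJ := fun t : Fin m => DFunLike.congr_fun h (2 * t.val + 2)
  have hA := DFunLike.congr_fun h 1
  have hB := DFunLike.congr_fun h (2 * m + 1)
  simp only [deg_Jc, deg_J, deg_1 hm, deg_n hm] at hJc hJ hA hB
  obtain ⟨k, M, E⟩ := d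
  obtain ⟨k', M', E'⟩ := e
  simp only at hJc hJ hA hB hle
  obtain ⟨t, rfl⟩ : ∃ t, k' = k + 2 * t := ⟨(k' - k) / 2, by omega⟩
  obtain ⟨L, h1, h2, h3, h4⟩ := expand (K := K) t M'
  have hE : E.Perm E' := List.perm_iff_count.mpr hJc
  have hM : M.Perm L := by
    rw [List.perm_iff_count]
    rintro (i | _ | _)
    · rw [h2, hJ]
    · omega
    · omega
  simp only [val]
  rw [(pairProd_perm (zq K) zq_symm zq_rel hM).1, h1, (hE.map _).prod_eq]
  ring

lemma val_eq (hm : 2 ≤ m) (d e : Dat m) (h : deg d = deg e) : val K d = val K e := by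
  rcases le_total d.1 e.1 with hle | hle
  · exact val_eq_aux hm d e h hle
  · exact (val_eq_aux hm e d h.symm hle).symm

lemma ker_le (hm : 2 ≤ m) : RingHom.ker (piDo K m) ≤ Ideal.span (GDo K m) := by
  classical
  let r : (ℕ →₀ ℕ) → Quo K m := fun e =>
    if h : ∃ d : Dat m, deg d = e then val K h.choose else 0
  have hr : ∀ d : Dat m, r (deg d) = val K d := by
    intro d
    have hex : ∃ d' : Dat m, deg d' = deg d := ⟨d, rfl⟩
    simp only [r, dif_pos hex]
    exact val_eq hm _ _ hex.choose_spec
  let ρ : MvPolynomial ℕ K →ₗ[K] Quo K m := (basisMonomials ℕ K).constr K r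
  have hρ : ∀ e, ρ (monomial e 1) = r e := by
    intro e
    have := (basisMonomials ℕ K).constr_basis K r e
    rwa [coe_basisMonomials] at this
  have hcomp : ρ ∘ₗ (piDo K m).toLinearMap =
      (Ideal.Quotient.mkₐ K (Ideal.span (GDo K m))).toLinearMap := by
    refine (basisMonomials (DoVar m) K).ext fun s => ?_
    obtain ⟨d, h1, h2⟩ := monomial_dat (K := K) s
    rw [coe_basisMonomials]
    simp only [LinearMap.comp_apply, AlgHom.toLinearMap_apply, h2, hρ, hr,
      Ideal.Quotient.mkₐ_eq_mk]
    exact h1.symm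
  intro f hf
  have := LinearMap.congr_fun hcomp f
  simp only [LinearMap.comp_apply, AlgHom.toLinearMap_apply, Ideal.Quotient.mkₐ_eq_mk] at this
  rw [RingHom.mem_ker] at hf
  have hf' : piDo K m f = 0 := hf
  rw [hf', map_zero] at this
  exact Ideal.Quotient.eq_zero_iff_mem.mp this.symm

end DoProof

/-- `𝒢_{D_{2m+1}}` is a minimal generating set of `I_{D_{2m+1}}`: it
generates the toric ideal, and no proper subset of it generates the toric ideal. -/
theorem GDo_minimal_generating (K : Type*) [Field K] (m : ℕ) (hm : 2 ≤ m) :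
    Ideal.span (GDo K m) = RingHom.ker (piDo K m) ∧
      ∀ S : Set (MvPolynomial (DoVar m) K), S ⊂ GDo K m →
        Ideal.span S ≠ RingHom.ker (piDo K m) := by
  have hle : Ideal.span (GDo K m) ≤ RingHom.ker (piDo K m) := by
    rw [Ideal.span_le]
    intro g hg
    obtain ⟨s, a, b, h, rfl⟩ := DoProof.exists_gen hg
    exact DoProof.gen_pi h
  refine ⟨le_antisymm hle (DoProof.ker_le hm), fun S hS hspan => ?_⟩
  have hsub : S ⊆ GDo K m := hS.1
  have hnot : ¬ GDo K m ⊆ S := hS.2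
  obtain ⟨g, hg, hgS⟩ := Set.not_subset.mp hnot
  refine DoProof.minimal hg ?_
  have h1 : g ∈ Ideal.span S := by rw [hspan]; exact hle (Ideal.subset_span hg)
  have h2 : S ⊆ GDo K m \ {g} := by
    intro x hx
    refine ⟨hsub hx, ?_⟩
    rintro rfl
    exact hgS hx
  exact Ideal.span_mono h2 h1
end

section
/- Each of the six binomials x_7x_8 − x_9x_{10}, x_6x_9 − x_8x_{10}, x_6x_7 − x_{10}², x_4x_{10} − x_8x_9, x_4x_7 − x_9², x_4x_6 − x_8² is an indispensable binomial of I_{E_7}: every set B of binomials (differences of two monomials of R) whose generated ideal equals I_{E_7} contains each of these six binomials or its negative; consequently {x_7x_8 − x_9x_{10}, x_6x_9 − x_8x_{10}, x_6x_7 − x_{10}², x_4x_{10} − x_8x_9, x_4x_7 − x_9², x_4x_6 − x_8²} is, up to signs, the unique minimal binomial generating set of I_{E_7}. -/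
open MvPolynomial

/-- The toric map `π : K[x_1,…,x_10] → K[u_1,…,u_7]` of the `E_7` configuration, where
`x_i` is the variable `X (i-1) : MvPolynomial (Fin 10) K` and `u_j = X (j-1)` in
`MvPolynomial (Fin 7) K`:
`π(x_1)=u_1, π(x_2)=u_2, π(x_3)=u_3, π(x_4)=u_4², π(x_5)=u_5, π(x_6)=u_6², π(x_7)=u_7²,
π(x_8)=u_4u_6, π(x_9)=u_4u_7, π(x_{10})=u_6u_7`. -/
noncomputable def piE7 (K : Type*) [Field K] :
    MvPolynomial (Fin 10) K →ₐ[K] MvPolynomial (Fin 7) K :=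
  aeval ![X 0, X 1, X 2, X 3 ^ 2, X 4, X 5 ^ 2, X 6 ^ 2, X 3 * X 5, X 3 * X 6, X 5 * X 6]

/-- The set `𝒢_{E_7}` of six binomials (with `x_i = X (i-1)`):
`x_7x_8 − x_9x_{10}`, `x_6x_9 − x_8x_{10}`, `x_6x_7 − x_{10}²`, `x_4x_{10} − x_8x_9`,
`x_4x_7 − x_9²`, `x_4x_6 − x_8²`. -/
noncomputable def GE7 (K : Type*) [Field K] : Set (MvPolynomial (Fin 10) K) :=
  { X 6 * X 7 - X 8 * X 9,      -- x7x8 − x9x10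
    X 5 * X 8 - X 7 * X 9,      -- x6x9 − x8x10
    X 5 * X 6 - X 9 ^ 2,        -- x6x7 − x10²
    X 3 * X 9 - X 7 * X 8,      -- x4x10 − x8x9
    X 3 * X 6 - X 8 ^ 2,        -- x4x7 − x9²
    X 3 * X 5 - X 7 ^ 2 }       -- x4x6 − x8²


section generation

/-- normal form in the three-variable Veronese part -/
def vF {A : Type*} [CommRing A] (x y z p q r : A) (a b c : ℕ) : A :=
  x ^ (a / 2) * y ^ (b / 2) * z ^ (c / 2) *
    (if a % 2 = 1 then (if b % 2 = 1 then p else q) else (if b % 2 = 1 then r else 1))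

variable {A : Type*} [CommRing A] (x y z p q r : A) (a b c : ℕ)

lemma vF_x : vF x y z p q r (a + 2) b c = vF x y z p q r a b c * x := by
  have h1 : (a + 2) / 2 = a / 2 + 1 := by omega
  have h2 : (a + 2) % 2 = a % 2 := by omega
  simp only [vF, h1, h2]; ring

lemma vF_y : vF x y z p q r a (b + 2) c = vF x y z p q r a b c * y := by
  have h1 : (b + 2) / 2 = b / 2 + 1 := by omega
  have h2 : (b + 2) % 2 = b % 2 := by omega
  simp only [vF, h1, h2]; ring

lemma vF_z : vF x y z p q r a b (c + 2) = vF x y z p q r a b c * z := by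
  have h1 : (c + 2) / 2 = c / 2 + 1 := by omega
  simp only [vF, h1]; ring

lemma par_cases (h : (a + b + c) % 2 = 0) : ∃ i j k : ℕ,
    (a = 2 * i ∧ b = 2 * j ∧ c = 2 * k) ∨ (a = 2 * i + 1 ∧ b = 2 * j + 1 ∧ c = 2 * k) ∨
    (a = 2 * i + 1 ∧ b = 2 * j ∧ c = 2 * k + 1) ∨ (a = 2 * i ∧ b = 2 * j + 1 ∧ c = 2 * k + 1) :=
  ⟨a / 2, b / 2, c / 2, by omega⟩

lemma d0 (i : ℕ) : 2 * i / 2 = i := by omega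
lemma d1 (i : ℕ) : (2 * i + 1) / 2 = i := by omega
lemma d2 (i : ℕ) : (2 * i + 1 + 1) / 2 = i + 1 := by omega
lemma m0 (i : ℕ) : 2 * i % 2 = 0 := by omega
lemma m1 (i : ℕ) : (2 * i + 1) % 2 = 1 := by omega
lemma m2 (i : ℕ) : (2 * i + 1 + 1) % 2 = 0 := by omega

lemma vF_p (h1 : p * p = x * y) (h2 : p * q = x * r) (h3 : p * r = y * q)
    (h : (a + b + c) % 2 = 0) :
    vF x y z p q r (a + 1) (b + 1) c = vF x y z p q r a b c * p := by
  obtain ⟨i, j, k, h | h | h | h⟩ := par_cases a b c h <;> obtain ⟨rfl, rfl, rfl⟩ := h <;>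
    simp only [vF, d0, d1, d2, m0, m1, m2, if_true, zero_ne_one, if_false]
  · ring
  · linear_combination -(x ^ i * y ^ j * z ^ k) * h1
  · linear_combination -(x ^ i * y ^ j * z ^ k) * h2
  · linear_combination -(x ^ i * y ^ j * z ^ k) * h3

lemma vF_q (h1 : q * q = x * z) (h2 : p * q = x * r) (h3 : q * r = z * p)
    (h : (a + b + c) % 2 = 0) :
    vF x y z p q r (a + 1) b (c + 1) = vF x y z p q r a b c * q := by
  obtain ⟨i, j, k, h | h | h | h⟩ := par_cases a b c h <;> obtain ⟨rfl, rfl, rfl⟩ := h <;>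
    simp only [vF, d0, d1, d2, m0, m1, m2, if_true, zero_ne_one, if_false]
  · ring
  · linear_combination -(x ^ i * y ^ j * z ^ k) * h2
  · linear_combination -(x ^ i * y ^ j * z ^ k) * h1
  · linear_combination -(x ^ i * y ^ j * z ^ k) * h3

lemma vF_r (h1 : r * r = y * z) (h2 : p * r = y * q) (h3 : q * r = z * p)
    (h : (a + b + c) % 2 = 0) :
    vF x y z p q r a (b + 1) (c + 1) = vF x y z p q r a b c * r := by
  obtain ⟨i, j, k, h | h | h | h⟩ := par_cases a b c h <;> obtain ⟨rfl, rfl, rfl⟩ := h <;>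
    simp only [vF, d0, d1, d2, m0, m1, m2, if_true, zero_ne_one, if_false]
  · ring
  · linear_combination -(x ^ i * y ^ j * z ^ k) * h2
  · linear_combination -(x ^ i * y ^ j * z ^ k) * h3
  · linear_combination -(x ^ i * y ^ j * z ^ k) * h1

end generation

/-- full normal form -/
def nF {A : Type*} [CommRing A] (y : Fin 10 → A) (m : Fin 7 →₀ ℕ) : A :=
  y 0 ^ m 0 * y 1 ^ m 1 * y 2 ^ m 2 * y 4 ^ m 4 *
    vF (y 3) (y 5) (y 6) (y 7) (y 8) (y 9) (m 3) (m 5) (m 6)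

/-- exponents of the images of the variables -/
noncomputable def wE7 : Fin 10 → (Fin 7 →₀ ℕ) :=
  ![Finsupp.single 0 1, Finsupp.single 1 1, Finsupp.single 2 1, Finsupp.single 3 2,
    Finsupp.single 4 1, Finsupp.single 5 2, Finsupp.single 6 2,
    Finsupp.single 3 1 + Finsupp.single 5 1, Finsupp.single 3 1 + Finsupp.single 6 1,
    Finsupp.single 5 1 + Finsupp.single 6 1]

lemma piE7_X (K : Type*) [Field K] (i : Fin 10) :
    piE7 K (X i) = monomial (wE7 i) 1 := by
  rw [piE7, aeval_X]
  fin_cases i <;> simp [wE7, X, monomial_mul, monomial_pow]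

lemma nF_step {A : Type*} [CommRing A] (y : Fin 10 → A)
    (h1 : y 6 * y 7 = y 8 * y 9) (h2 : y 5 * y 8 = y 7 * y 9) (h3 : y 5 * y 6 = y 9 ^ 2)
    (h4 : y 3 * y 9 = y 7 * y 8) (h5 : y 3 * y 6 = y 8 ^ 2) (h6 : y 3 * y 5 = y 7 ^ 2)
    (m : Fin 7 →₀ ℕ) (hm : (m 3 + m 5 + m 6) % 2 = 0) (i : Fin 10) :
    nF y (m + wE7 i) = nF y m * y i ∧
    ((m + wE7 i) 3 + (m + wE7 i) 5 + (m + wE7 i) 6) % 2 = 0 := by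
  have e7 := vF_p (y 3) (y 5) (y 6) (y 7) (y 8) (y 9) (m 3) (m 5) (m 6)
    (by linear_combination -h6) (by linear_combination -h4) (by linear_combination -h2) hm
  have e8 := vF_q (y 3) (y 5) (y 6) (y 7) (y 8) (y 9) (m 3) (m 5) (m 6)
    (by linear_combination -h5) (by linear_combination -h4) (by linear_combination -h1) hm
  have e9 := vF_r (y 3) (y 5) (y 6) (y 7) (y 8) (y 9) (m 3) (m 5) (m 6)
    (by linear_combination -h3) (by linear_combination -h2) (by linear_combination -h1) hm
  fin_cases i <;> refine ⟨?_, ?_⟩ <;>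
    simp [nF, wE7, Finsupp.single_apply, vF_x, vF_y, vF_z, e7, e8, e9] <;> first | omega | ring

lemma GE7_le (K : Type*) [Field K] : Ideal.span (GE7 K) ≤ RingHom.ker (piE7 K) := by
  rw [Ideal.span_le]
  rintro g (rfl | rfl | rfl | rfl | rfl | rfl) <;>
    simp [RingHom.mem_ker, piE7] <;> ring

lemma ker_le (K : Type*) [Field K] : RingHom.ker (piE7 K) ≤ Ideal.span (GE7 K) := by
  set J := Ideal.span (GE7 K) with hJ
  let y : Fin 10 → (MvPolynomial (Fin 10) K ⧸ J) := fun i => Ideal.Quotient.mk J (X i)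
  have rel : ∀ f g : MvPolynomial (Fin 10) K, f - g ∈ GE7 K →
      Ideal.Quotient.mk J f = Ideal.Quotient.mk J g := fun f g h =>
    Ideal.Quotient.eq.2 (Ideal.subset_span h)
  have step := nF_step y
    (rel (X 6 * X 7) (X 8 * X 9) (by simp [GE7]))
    (rel (X 5 * X 8) (X 7 * X 9) (by simp [GE7]))
    (rel (X 5 * X 6) (X 9 ^ 2) (by simp [GE7]))
    (rel (X 3 * X 9) (X 7 * X 8) (by simp [GE7]))
    (rel (X 3 * X 6) (X 8 ^ 2) (by simp [GE7]))
    (rel (X 3 * X 5) (X 7 ^ 2) (by simp [GE7]))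
  let s : MvPolynomial (Fin 7) K →ₗ[K] (MvPolynomial (Fin 10) K ⧸ J) :=
    (basisMonomials (Fin 7) K).constr K (nF y)
  have hs : ∀ m (a : K), s (monomial m a) = a • nF y m := by
    intro m a
    have h : s (monomial m 1) = nF y m := by
      have := (basisMonomials (Fin 7) K).constr_basis K (nF y) m
      simpa [s] using this
    rw [← h, ← map_smul, smul_monomial, smul_eq_mul, mul_one]
  have key : ∀ d (a : K), (∃ (m : Fin 7 →₀ ℕ) (c : K), (m 3 + m 5 + m 6) % 2 = 0 ∧
      piE7 K (monomial d a) = monomial m c) ∧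
      s (piE7 K (monomial d a)) = Ideal.Quotient.mk J (monomial d a) := by
    intro d a
    refine induction_on_monomial (motive := fun f => (∃ (m : Fin 7 →₀ ℕ) (c : K),
      (m 3 + m 5 + m 6) % 2 = 0 ∧ piE7 K f = monomial m c) ∧
      s (piE7 K f) = Ideal.Quotient.mk J f) ?_ ?_ d a
    · intro a
      have h : piE7 K (C a) = monomial 0 a := by simp [piE7]
      refine ⟨⟨0, a, by simp, h⟩, ?_⟩
      rw [h, hs]
      simp only [nF, vF, Finsupp.coe_zero, Pi.zero_apply]
      rw [show (C a : MvPolynomial (Fin 10) K) = a • 1 by rw [smul_eq_C_mul, mul_one]]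
      have h1 : (Ideal.Quotient.mk J) (a • 1) = a • (1 : MvPolynomial (Fin 10) K ⧸ J) := rfl
      rw [h1]
      simp
    · rintro f i ⟨⟨m, c, hm, hf⟩, h⟩
      have h' : piE7 K (f * X i) = monomial (m + wE7 i) c := by
        rw [map_mul, hf, piE7_X, monomial_mul, mul_one]
      refine ⟨⟨_, _, (step m hm i).2, h'⟩, ?_⟩
      rw [h', hs, (step m hm i).1, map_mul, ← h, hf, hs, smul_mul_assoc]
  intro f hf
  have h : s (piE7 K f) = Ideal.Quotient.mk J f := by
    conv_lhs => rw [f.as_sum]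
    conv_rhs => rw [f.as_sum]
    simp only [map_sum]
    exact Finset.sum_congr rfl fun d _ => (key d _).2
  rw [RingHom.mem_ker] at hf
  rw [hf, map_zero] at h
  exact Ideal.Quotient.eq_zero_iff_mem.1 h.symm

/-- weight of a monomial -/
noncomputable def wt (d : Fin 10 →₀ ℕ) : Fin 7 →₀ ℕ := ∑ i, d i • wE7 i

lemma wt_add (d e : Fin 10 →₀ ℕ) : wt (d + e) = wt d + wt e := by
  simp [wt, add_smul, Finset.sum_add_distrib]

lemma piE7_monomial (K : Type*) [Field K] (d : Fin 10 →₀ ℕ) :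
    piE7 K (monomial d 1) = monomial (wt d) 1 := by
  rw [monomial_eq, Finsupp.prod_fintype _ _ (by simp)]
  simp only [map_mul, map_prod, map_pow, piE7_X, monomial_pow, one_pow, wt, map_one, one_mul]
  exact (monomial_sum_one _ _).symm

lemma wt_eq (K : Type*) [Field K] (d e : Fin 10 →₀ ℕ)
    (h : (monomial d (1 : K) - monomial e (1 : K)) ∈ RingHom.ker (piE7 K)) : wt d = wt e := by
  rw [RingHom.mem_ker, map_sub, piE7_monomial, piE7_monomial, sub_eq_zero] at h
  exact monomial_left_injective one_ne_zero h

lemma indisp (K : Type*) [Field K] (p q : Fin 10 →₀ ℕ) (hpq : p ≠ q)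
    (hg : (monomial p (1 : K) - monomial q (1 : K)) ∈ RingHom.ker (piE7 K))
    (hfib : ∀ d, wt d = wt p → d = p ∨ d = q)
    (hcop : ∀ m, m ≤ p → m ≤ q → m = 0)
    (B : Set (MvPolynomial (Fin 10) K))
    (hB : ∀ b ∈ B, ∃ d e : Fin 10 →₀ ℕ, d ≠ e ∧ b = monomial d (1 : K) - monomial e (1 : K))
    (hsp : Ideal.span B = RingHom.ker (piE7 K)) :
    (monomial p (1 : K) - monomial q (1 : K)) ∈ B ∨
      -(monomial p (1 : K) - monomial q (1 : K)) ∈ B := by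
  by_contra! hcon
  have aux : ∀ d e : Fin 10 →₀ ℕ, wt d = wt e → d ≠ e → d ≤ p → d = p ∧ e = q := by
    intro d e hw hne hle
    obtain ⟨m, rfl⟩ := exists_add_of_le hle
    rcases hfib (e + m) (by rw [wt_add, wt_add, hw]) with h | h
    · exact absurd (add_right_cancel h).symm hne
    · have := hcop m (by simp) (by rw [← h]; simp)
      subst this
      simpa using h
  have hz : ∀ f ∈ Ideal.span B, ∀ a, coeff p (a * f) = 0 := by
    intro f hf
    refine Submodule.span_induction (p := fun f _ => ∀ a, coeff p (a * f) = 0) ?_ ?_ ?_ ?_ hf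
    · intro b hb a
      obtain ⟨d, e, hne, rfl⟩ := hB b hb
      have hw := wt_eq K d e (hsp ▸ Ideal.subset_span hb)
      have n1 : ¬ d ≤ p := fun h => by
        obtain ⟨rfl, rfl⟩ := aux d e hw hne h
        exact hcon.1 hb
      have n2 : ¬ e ≤ p := fun h => by
        obtain ⟨rfl, rfl⟩ := aux e d hw.symm hne.symm h
        exact hcon.2 (by rwa [neg_sub])
      rw [mul_sub, coeff_sub, coeff_mul_monomial', coeff_mul_monomial', if_neg n1, if_neg n2,
        sub_zero]
    · simp
    · intro f g _ _ h1 h2 a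
      rw [mul_add, coeff_add, h1, h2, add_zero]
    · intro c f _ h a
      rw [smul_eq_mul, ← mul_assoc]
      exact h _
  have := hz _ (hsp ▸ hg) 1
  rw [one_mul, coeff_sub, coeff_monomial, coeff_monomial, if_pos rfl, if_neg hpq.symm] at this
  simp at this

lemma wt_coords (d e : Fin 10 →₀ ℕ) (h : wt d = wt e) :
    d 0 = e 0 ∧ d 1 = e 1 ∧ d 2 = e 2 ∧ d 4 = e 4 ∧
    2 * d 3 + d 7 + d 8 = 2 * e 3 + e 7 + e 8 ∧
    2 * d 5 + d 7 + d 9 = 2 * e 5 + e 7 + e 9 ∧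
    2 * d 6 + d 8 + d 9 = 2 * e 6 + e 8 + e 9 := by
  have H := fun j => DFunLike.congr_fun h j
  have h0 := H 0
  have h1 := H 1
  have h2 := H 2
  have h3 := H 3
  have h4 := H 4
  have h5 := H 5
  have h6 := H 6
  simp [wt, wE7, Fin.sum_univ_succ, Finsupp.single_apply] at h0 h1 h2 h3 h4 h5 h6
  omega

lemma indispX (K : Type*) [Field K] (i j k l : Fin 10)
    (hg : (X i * X j - X k * X l : MvPolynomial (Fin 10) K) ∈ GE7 K)
    (hik : i ≠ k) (hil : i ≠ l) (hjk : j ≠ k) (hjl : j ≠ l)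
    (hfib : ∀ d, wt d = wt (Finsupp.single i 1 + Finsupp.single j 1) →
      d = Finsupp.single i 1 + Finsupp.single j 1 ∨ d = Finsupp.single k 1 + Finsupp.single l 1)
    (B : Set (MvPolynomial (Fin 10) K))
    (hB : ∀ b ∈ B, ∃ d e : Fin 10 →₀ ℕ, d ≠ e ∧ b = monomial d (1 : K) - monomial e (1 : K))
    (hsp : Ideal.span B = RingHom.ker (piE7 K)) :
    (X i * X j - X k * X l) ∈ B ∨ -(X i * X j - X k * X l) ∈ B := by
  have e : ∀ a b : Fin 10, (X a * X b : MvPolynomial (Fin 10) K) =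
      monomial (Finsupp.single a 1 + Finsupp.single b 1) 1 := by
    intro a b; simp [X, monomial_mul]
  have hk := GE7_le K (Ideal.subset_span hg)
  rw [e, e] at hk ⊢
  refine indisp K _ _ ?_ hk hfib ?_ B hB hsp
  · intro h
    have := DFunLike.congr_fun h i
    simp [Finsupp.single_apply, hik.symm, hil.symm] at this
  · intro m h1 h2
    ext t
    have a1 := h1 t
    have a2 := h2 t
    simp only [Finsupp.add_apply, Finsupp.single_apply, Finsupp.coe_zero, Pi.zero_apply] at *
    by_cases hi : i = t
    · subst hi
      simp [hik.symm, hil.symm] at a2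
      exact a2
    · by_cases hj : j = t
      · subst hj
        simp [hjk.symm, hjl.symm] at a2
        exact a2
      · simp [hi, hj] at a1
        exact a1

lemma ext10 (d e : Fin 10 →₀ ℕ) (h : d 0 = e 0 ∧ d 1 = e 1 ∧ d 2 = e 2 ∧ d 3 = e 3 ∧ d 4 = e 4 ∧
    d 5 = e 5 ∧ d 6 = e 6 ∧ d 7 = e 7 ∧ d 8 = e 8 ∧ d 9 = e 9) : d = e := by
  obtain ⟨h0, h1, h2, h3, h4, h5, h6, h7, h8, h9⟩ := h
  ext i
  fin_cases i <;> assumption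

lemma part1 (K : Type*) [Field K] (B : Set (MvPolynomial (Fin 10) K))
    (hB : ∀ b ∈ B, ∃ d e : Fin 10 →₀ ℕ, d ≠ e ∧ b = monomial d (1 : K) - monomial e (1 : K))
    (hsp : Ideal.span B = RingHom.ker (piE7 K)) :
    ∀ g ∈ GE7 K, g ∈ B ∨ -g ∈ B := by
  rintro g (rfl | rfl | rfl | rfl | rfl | rfl)
  all_goals
    try rw [pow_two]
    refine indispX K _ _ _ _ (by simp [GE7, pow_two]) (by decide) (by decide) (by decide)
      (by decide) ?_ B hB hsp
    intro d hd
    have h := wt_coords _ _ hd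
    simp [Finsupp.single_apply] at h
    rw [or_iff_not_imp_left]
    intro hne
    apply ext10
    by_contra hne'
    apply hne
    apply ext10
    simp [Finsupp.single_apply] at hne' ⊢
    omega

/-- each of the six binomials of `𝒢_{E_7}` is indispensable: every set `B` of
binomials generating `I_{E_7}` contains each of them or its negative; consequently `𝒢_{E_7}`
is, up to signs, the unique minimal binomial generating set of `I_{E_7}` (every minimal
binomial generating set consists, up to sign, of exactly these six binomials). -/
theorem GE7_indispensable (K : Type*) [Field K] :
    (∀ B : Set (MvPolynomial (Fin 10) K),
      (∀ b ∈ B, ∃ d e : Fin 10 →₀ ℕ, d ≠ e ∧ b = monomial d (1 : K) - monomial e (1 : K)) →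
      Ideal.span B = RingHom.ker (piE7 K) →
      ∀ g ∈ GE7 K, g ∈ B ∨ -g ∈ B) ∧
    (∀ B : Set (MvPolynomial (Fin 10) K),
      (∀ b ∈ B, ∃ d e : Fin 10 →₀ ℕ, d ≠ e ∧ b = monomial d (1 : K) - monomial e (1 : K)) →
      Ideal.span B = RingHom.ker (piE7 K) →
      (∀ S : Set (MvPolynomial (Fin 10) K), S ⊂ B →
        Ideal.span S ≠ RingHom.ker (piE7 K)) →
      ∀ b ∈ B, b ∈ GE7 K ∨ -b ∈ GE7 K) := by
  refine ⟨part1 K, ?_⟩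
  intro B hB hsp hmin b hb
  by_contra hcon
  refine hmin {b ∈ B | b ∈ GE7 K ∨ -b ∈ GE7 K} ?_ ?_
  · refine ⟨fun x hx => hx.1, fun h => hcon (h hb).2⟩
  · apply le_antisymm
    · rw [← hsp]
      exact Ideal.span_mono fun x hx => hx.1
    · refine (ker_le K).trans (Ideal.span_le.2 ?_)
      intro g hg
      rcases part1 K B hB hsp g hg with h | h
      · exact Ideal.subset_span ⟨h, Or.inl hg⟩
      · have : -g ∈ Ideal.span {b ∈ B | b ∈ GE7 K ∨ -b ∈ GE7 K} :=
          Ideal.subset_span ⟨h, Or.inr (by rwa [neg_neg])⟩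
        exact neg_mem_iff.1 this
end
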